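/- arXiv:1510.03052 — 2 statements merged into one kernel-verified Lean document; each statement's English description precedes it below -/
import Mathlib

section
/- There are, up to isomorphism, exactly two (2)-pancyclic graphs on 13 vertices with at most 18 edges. -/
open SimpleGraph

/-- The number of cycles of length `k` in `G`, counted as subgraphs of `G`
isomorphic to the cycle graph `C_k`. -/
noncomputable def cycleCount {V : Type*} (G : SimpleGraph V) (k : ℕ) : ℕ :=
  {H : G.Subgraph | Nonempty (H.coe ≃g cycleGraph k)}.ncard

/-- A graph on `v ≥ 3` vertices is `(r)`-pancyclic if it contains precisely `r`
cycles of every length from `3` to `v`. -/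
def IsRPancyclic {V : Type*} [Fintype V] (G : SimpleGraph V) (r : ℕ) : Prop :=
  3 ≤ Fintype.card V ∧
    ∀ k : ℕ, 3 ≤ k → k ≤ Fintype.card V → cycleCount G k = r

/-- There are, up to isomorphism, exactly `N` graphs on `v` vertices with at most
`b` edges satisfying the given pancyclicity property with parameter `r`. -/
def ExactlyNUpToIso (r N v b : ℕ) : Prop :=
  ∃ Gs : Fin N → SimpleGraph (Fin v),
    (∀ i j : Fin N, i ≠ j → IsEmpty (Gs i ≃g Gs j)) ∧
    (∀ i : Fin N, IsRPancyclic (Gs i) r ∧ (Gs i).edgeSet.ncard ≤ b) ∧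
    (∀ (W : Type) [Fintype W] (G : SimpleGraph W), Fintype.card W = v →
      G.edgeSet.ncard ≤ b → IsRPancyclic G r → ∃ i : Fin N, Nonempty (G ≃g Gs i))

/-!
A 2-pancyclic graph on 13 vertices has a Hamiltonian cycle, so it is the cycle `0, 1, …, 12` with at
most five chords, and after a rotation one of the longest chords is `0l` with `2 ≤ l ≤ 6`. Adding an
edge `ab` to a graph creates exactly one cycle of length `k` for each path with `k - 1` edges from
`a` to `b`. Cycle numbers thus grow with every chord, which bounds a search that adds chords one at
a time and gives up as soon as some length occurs three times. The numbers of cycles of all lengths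
are kept as the base-16 digits of one natural number, and the path counts are obtained in the same
form from a bitmask recursion on vertex sets, which makes the search small enough for the kernel.
It finds four graphs, all with `l = 5`; the reflection `u ↦ 5 - u` matches them in two pairs.
-/

namespace PancyclicCount

section CycleCount

variable {V W : Type*} {G : SimpleGraph V} {G' : SimpleGraph W}

theorem map_toHom_injective (f : Copy G G') : Function.Injective (Subgraph.map f.toHom) := by
  intro H H' h
  have hverts : f.toHom '' H.verts = f.toHom '' H'.verts := congrArg Subgraph.verts h
  have hadj : (H.map f.toHom).Adj = (H'.map f.toHom).Adj := congrArg Subgraph.Adj h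
  ext u v
  · rw [f.injective.image_injective hverts]
  · have hf : Function.Injective f.toHom := f.injective
    simpa only [Subgraph.map_adj, Relation.map_apply_apply hf hf] using
      iff_of_eq (congrFun₂ hadj (f.toHom u) (f.toHom v))

theorem cycleCount_le_of_copy [Finite W] (f : Copy G G') (k : ℕ) :
    cycleCount G k ≤ cycleCount G' k :=
  Set.ncard_le_ncard_of_injOn (Subgraph.map f.toHom)
    (fun H ⟨e⟩ ↦ ⟨(f.isoSubgraphMap H).symm.trans e⟩) (map_toHom_injective f).injOn

theorem cycleCount_congr [Finite V] [Finite W] (e : G ≃g G') (k : ℕ) :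
    cycleCount G k = cycleCount G' k :=
  (cycleCount_le_of_copy e.toCopy k).antisymm (cycleCount_le_of_copy e.symm.toCopy k)

theorem cycleCount_mono [Finite V] {G H : SimpleGraph V} (h : G ≤ H) (k : ℕ) :
    cycleCount G k ≤ cycleCount H k :=
  cycleCount_le_of_copy (.ofLE G H h) k

theorem exists_toSubgraph_eq {H : G.Subgraph} (e : H.coe ≃g G') :
    ∃ f : Copy G' G, f.toSubgraph = H := by
  rw [← Set.mem_range, Copy.range_toSubgraph]
  exact ⟨e.symm⟩

theorem exists_iso_of_toSubgraph_eq {f g : Copy G' G}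
    (h : f.toSubgraph = g.toSubgraph) : ∃ σ : G' ≃g G', ∀ x, g (σ x) = f x := by
  obtain ⟨e, he⟩ : ∃ e : G' ≃g g.toSubgraph.coe, ∀ x, (e x : V) = f x := by
    rw [← h]
    exact ⟨f.isoToSubgraph, fun _ ↦ rfl⟩
  refine ⟨e.trans g.isoToSubgraph.symm, fun x ↦ ?_⟩
  rw [← he]
  exact congrArg Subtype.val (g.isoToSubgraph.apply_symm_apply (e x))

theorem toSubgraph_comp_iso (f : Copy G' G) (σ : G' ≃g G') :
    (f.comp σ.toCopy).toSubgraph = f.toSubgraph := by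
  have h : (f.comp σ.toCopy).toHom = f.toHom.comp σ.toHom := rfl
  rw [Copy.toSubgraph, h, Subgraph.map_comp, Subgraph.map_iso_top]

theorem exists_copy_of_cycleCount_ne_zero {k : ℕ} (h : cycleCount G k ≠ 0) :
    Nonempty (Copy (cycleGraph k) G) := by
  obtain ⟨H, ⟨e⟩⟩ := Set.nonempty_of_ncard_ne_zero h
  exact ⟨H.coeCopy.comp e.symm.toCopy⟩

end CycleCount

section CycleGraph

variable {m : ℕ}

theorem cycleGraph_adj_iff {u v : Fin (m + 3)} :
    (cycleGraph (m + 3)).Adj u v ↔ v = u + 1 ∨ u = v + 1 := by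
  rw [cycleGraph_adj, sub_eq_iff_eq_add, sub_eq_iff_eq_add, or_comm, add_comm 1, add_comm 1]

theorem last_eq_neg_one : Fin.last (m + 2) = -1 := by
  rw [eq_neg_iff_add_eq_zero, Fin.last_add_one]

theorem exists_cycleGraph_iso_of_adj {x y : Fin (m + 3)} (h : (cycleGraph (m + 3)).Adj x y) :
    ∃ σ : cycleGraph (m + 3) ≃g cycleGraph (m + 3), σ 0 = x ∧ σ (Fin.last (m + 2)) = y := by
  rcases cycleGraph_adj_iff.1 h with rfl | rfl
  · refine ⟨⟨Equiv.subLeft x, fun {u v} ↦ ?_⟩, by simp, by simp [last_eq_neg_one]⟩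
    simp only [Equiv.subLeft_apply, cycleGraph_adj, sub_sub_sub_cancel_left, or_comm]
  · refine ⟨⟨Equiv.addRight (y + 1), fun {u v} ↦ ?_⟩, by simp, by simp [last_eq_neg_one]⟩
    simp only [Equiv.coe_addRight, cycleGraph_adj, add_sub_add_right_eq_sub]

theorem cycleGraph_iso_eq_self (σ : cycleGraph (m + 3) ≃g cycleGraph (m + 3)) (h0 : σ 0 = 0)
    (hlast : σ (-1) = -1) (i : Fin (m + 3)) : σ i = i := by
  suffices h : σ i = i ∧ σ (i - 1) = i - 1 from h.1
  induction i using Fin.induction with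
  | zero => simpa using ⟨h0, hlast⟩
  | succ j ih =>
    rw [← Fin.coeSucc_eq_succ]
    generalize (j.castSucc : Fin (m + 3)) = i at ih
    have hadj : (cycleGraph (m + 3)).Adj i (σ (i + 1)) := by
      rw [← ih.1]
      exact σ.map_rel_iff.2 (cycleGraph_adj_iff.2 (.inl (by rw [ih.1])))
    refine ⟨(cycleGraph_adj_iff.1 hadj).resolve_right fun h ↦ ?_, by simpa using ih.1⟩
    have h2 : i + 1 = i - 1 := σ.injective (by rw [ih.2, eq_sub_of_add_eq h.symm])
    rw [sub_eq_add_neg, add_right_inj, eq_neg_iff_add_eq_zero] at h2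
    exact absurd h2 nofun

theorem bijOn_toSubgraph {V : Type*} (G : SimpleGraph V) (a b : V) :
    Set.BijOn Copy.toSubgraph
      {f : Copy (cycleGraph (m + 3)) G | f 0 = a ∧ f (Fin.last (m + 2)) = b}
      {H | Nonempty (H.coe ≃g cycleGraph (m + 3)) ∧ H.Adj a b} := by
  refine ⟨?_, ?_, ?_⟩
  · rintro f ⟨rfl, rfl⟩
    exact ⟨⟨f.isoToSubgraph.symm⟩, 0, Fin.last _, cycleGraph_adj_iff.2 (.inr (by simp)), rfl, rfl⟩
  · rintro f ⟨hf0, hf1⟩ g ⟨hg0, hg1⟩ h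
    obtain ⟨σ, hσ⟩ := exists_iso_of_toSubgraph_eq h
    have h0 : σ 0 = 0 := g.injective ((hσ 0).trans (hf0.trans hg0.symm))
    have h1 : σ (Fin.last (m + 2)) = Fin.last (m + 2) :=
      g.injective ((hσ _).trans (hf1.trans hg1.symm))
    rw [last_eq_neg_one] at h1
    ext x
    rw [← hσ, cycleGraph_iso_eq_self σ h0 h1]
  · rintro H ⟨⟨e⟩, hadj⟩
    obtain ⟨f, rfl⟩ := exists_toSubgraph_eq e
    obtain ⟨x, y, hxy, rfl, rfl⟩ := hadj
    obtain ⟨σ, rfl, rfl⟩ := exists_cycleGraph_iso_of_adj hxy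
    exact ⟨f.comp σ.toCopy, ⟨rfl, rfl⟩, toSubgraph_comp_iso f σ⟩

end CycleGraph

section Paths

variable {V : Type*} {G H : SimpleGraph V} {U : Finset V} {a b u : V} {j m : ℕ}

/-- The paths with `j` edges from `u` to `b` in `G`, given by their vertex sequences, all of whose
vertices after `u` lie in `U`. -/
def paths (G : SimpleGraph V) (U : Finset V) (j : ℕ) (u b : V) : Set (Fin (j + 1) → V) :=
  {f | f 0 = u ∧ f (Fin.last j) = b ∧ Function.Injective f ∧
    (∀ i : Fin j, G.Adj (f i.castSucc) (f i.succ)) ∧ ∀ i : Fin j, f i.succ ∈ U}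

/-- The number of paths with `j` edges from `u` to `b` whose vertices after `u` lie in `U`. -/
noncomputable def pathCount (G : SimpleGraph V) (U : Finset V) (j : ℕ) (u b : V) : ℕ :=
  (paths G U j u b).ncard

theorem image_map_ofLE_eq (hadj : ¬G.Adj a b) (k : ℕ) :
    Subgraph.map (Copy.ofLE G (G ⊔ edge a b) le_sup_left).toHom ''
        {K | Nonempty (K.coe ≃g cycleGraph k)} =
      {K | Nonempty (K.coe ≃g cycleGraph k)} \ {K | K.Adj a b} := by
  ext K
  constructor
  · rintro ⟨K, ⟨e⟩, rfl⟩
    refine ⟨⟨((Copy.ofLE G _ _).isoSubgraphMap K).symm.trans e⟩, ?_⟩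
    rintro ⟨x, y, hxy, hx, hy⟩
    exact hadj (hx ▸ hy ▸ hxy.adj_sub)
  · rintro ⟨⟨e⟩, hK⟩
    obtain ⟨f, rfl⟩ := exists_toSubgraph_eq e
    have hle : f.toSubgraph.spanningCoe ≤ G := Subgraph.spanningCoe_sup_edge_le _ hK
    have hf {x y} (hxy : (cycleGraph k).Adj x y) : G.Adj (f x) (f y) :=
      hle ⟨x, y, hxy, rfl, rfl⟩
    let f' : Copy (cycleGraph k) G := ⟨⟨f, hf⟩, f.injective⟩
    exact ⟨f'.toSubgraph, ⟨f'.isoToSubgraph.symm⟩, (Subgraph.map_comp ..).symm⟩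

theorem coe_mem_paths [Fintype V] [DecidableEq V] (f : Copy (cycleGraph (m + 3)) (G ⊔ edge a b))
    (h0 : f 0 = a) (hlast : f (Fin.last (m + 2)) = b) :
    ⇑f ∈ paths G (Finset.univ.erase a) (m + 2) a b := by
  have hf : Function.Injective f := f.injective
  have hne (i : Fin (m + 2)) : f i.succ ≠ a := fun h ↦ Fin.succ_ne_zero i (hf (h.trans h0.symm))
  refine ⟨h0, hlast, hf, fun i ↦ ?_, fun i ↦ Finset.mem_erase.2 ⟨hne i, Finset.mem_univ _⟩⟩
  have hi : (cycleGraph (m + 3)).Adj i.castSucc i.succ :=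
    cycleGraph_adj_iff.2 (.inl (Fin.coeSucc_eq_succ).symm)
  refine (f.toHom.map_adj hi).resolve_right fun he ↦ ?_
  rcases (edge_adj ..).1 he with ⟨⟨h, h'⟩ | ⟨-, h'⟩, -⟩
  · have hi0 := Fin.val_eq_of_eq (hf (h.trans h0.symm))
    have hilast := Fin.val_eq_of_eq (hf (h'.trans hlast.symm))
    simp only [Fin.val_castSucc, Fin.val_zero, Fin.val_succ, Fin.val_last] at hi0 hilast
    omega
  · exact hne i h'

theorem bijOn_coe_paths [Fintype V] [DecidableEq V] (hab : a ≠ b) :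
    Set.BijOn DFunLike.coe
      {f : Copy (cycleGraph (m + 3)) (G ⊔ edge a b) | f 0 = a ∧ f (Fin.last (m + 2)) = b}
      (paths G (Finset.univ.erase a) (m + 2) a b) := by
  refine ⟨fun f hf ↦ coe_mem_paths f hf.1 hf.2, DFunLike.coe_injective.injOn, ?_⟩
  rintro f ⟨h0, hlast, hf, hG, -⟩
  have hsucc (x : Fin (m + 3)) : (G ⊔ edge a b).Adj (f x) (f (x + 1)) := by
    induction x using Fin.lastCases with
    | last =>
      rw [Fin.last_add_one, h0, hlast]
      exact .inr ((edge_adj ..).2 ⟨.inr ⟨rfl, rfl⟩, hab.symm⟩)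
    | cast i =>
      rw [Fin.coeSucc_eq_succ]
      exact .inl (hG i)
  refine ⟨⟨⟨f, fun {x y} hxy ↦ ?_⟩, hf⟩, ⟨h0, hlast⟩, rfl⟩
  rcases cycleGraph_adj_iff.1 hxy with rfl | rfl
  · exact hsucc x
  · exact (hsucc y).symm

theorem cycleCount_sup_edge [Fintype V] [DecidableEq V] (hab : a ≠ b) (hadj : ¬G.Adj a b) (m : ℕ) :
    cycleCount (G ⊔ edge a b) (m + 3) =
      cycleCount G (m + 3) + pathCount G (Finset.univ.erase a) (m + 2) a b := by
  rw [cycleCount, ← Set.ncard_inter_add_ncard_sdiff_eq_ncard _ {K | K.Adj a b}, add_comm,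
    ← image_map_ofLE_eq hadj, Set.ncard_image_of_injective _ (map_toHom_injective _)]
  congr 1
  exact (bijOn_toSubgraph (G ⊔ edge a b) a b).ncard_eq.symm.trans (bijOn_coe_paths hab).ncard_eq

theorem cons_mem_paths_iff [DecidableEq V] (hu : u ∉ U) {f : Fin (j + 1) → V} :
    (Fin.cons u f : Fin (j + 2) → V) ∈ paths G U (j + 1) u b ↔
      (f 0 ∈ U ∧ G.Adj u (f 0)) ∧ f ∈ paths G (U.erase (f 0)) j (f 0) b := by
  simp only [paths, Set.mem_ofPred_eq, Fin.cons_zero, ← Fin.succ_last, Fin.cons_succ,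
    Fin.cons_injective_iff, Set.mem_range, Fin.forall_fin_succ, Fin.castSucc_zero,
    ← Fin.succ_castSucc, Finset.mem_erase, true_and, not_exists, forall_and]
  constructor
  · rintro ⟨hb, ⟨-, hf⟩, ⟨hadj0, hadj⟩, hU0, hU⟩
    exact ⟨⟨hU0, hadj0⟩, hb, hf, hadj, fun i h ↦ Fin.succ_ne_zero i (hf h), hU⟩
  · rintro ⟨⟨hU0, hadj0⟩, hb, hf, hadj, -, hU⟩
    exact ⟨hb, ⟨⟨fun h ↦ hu (h ▸ hU0), fun i h ↦ hu (h ▸ hU i)⟩, hf⟩, ⟨hadj0, hadj⟩, hU0, hU⟩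

theorem pathCount_zero [DecidableEq V] : pathCount G U 0 u b = if u = b then 1 else 0 := by
  split_ifs with h
  · refine Set.ncard_eq_one.2 ⟨fun _ ↦ u, Set.eq_singleton_iff_unique_mem.2 ⟨?_, ?_⟩⟩
    · exact ⟨rfl, h, fun i j _ ↦ Subsingleton.elim (α := Fin 1) i j, nofun, nofun⟩
    · rintro f ⟨h0, -⟩
      ext i
      rw [Subsingleton.elim (α := Fin 1) i 0, h0]
  · rw [pathCount, Set.eq_empty_of_forall_notMem (s := paths G U 0 u b), Set.ncard_empty]
    exact fun f hf ↦ h (hf.1.symm.trans hf.2.1)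

theorem pathCount_succ_self (hu : u ∉ U) : pathCount G U (j + 1) u u = 0 := by
  rw [pathCount, Set.eq_empty_of_forall_notMem (s := paths G U (j + 1) u u), Set.ncard_empty]
  rintro f ⟨-, hlast, -, -, hU⟩
  exact hu (hlast ▸ hU (Fin.last j))

theorem image_cons_paths [DecidableEq V] {w : V} (hu : u ∉ U) (hw : w ∈ U) (hadj : G.Adj u w) :
    Fin.cons (α := fun _ ↦ V) u '' paths G (U.erase w) j w b =
      {f ∈ paths G U (j + 1) u b | f 1 = w} := by
  ext f
  constructor
  · rintro ⟨f, hf, rfl⟩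
    obtain rfl : f 0 = w := hf.1
    exact ⟨(cons_mem_paths_iff hu).2 ⟨⟨hw, hadj⟩, hf⟩, rfl⟩
  · rintro ⟨hf, rfl⟩
    obtain rfl : f 0 = u := hf.1
    refine ⟨Fin.tail f, ?_, Fin.cons_self_tail f⟩
    rw [← Fin.cons_self_tail f] at hf
    exact ((cons_mem_paths_iff hu).1 hf).2

theorem pathCount_succ [Finite V] [DecidableEq V] [DecidableRel G.Adj] (hu : u ∉ U) :
    pathCount G U (j + 1) u b = ∑ w ∈ U with G.Adj u w, pathCount G (U.erase w) j w b := by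
  classical
  have hfin := Set.toFinite (paths G U (j + 1) u b)
  rw [pathCount, Set.ncard_eq_toFinset_card _ hfin,
    Finset.card_eq_sum_card_fiberwise (f := fun f ↦ f 1) (t := U.filter (G.Adj u))]
  · refine Finset.sum_congr rfl fun w hw ↦ ?_
    obtain ⟨hwU, hadj⟩ := Finset.mem_filter.1 hw
    have hfiber : pathCount G (U.erase w) j w b = {f ∈ paths G U (j + 1) u b | f 1 = w}.ncard := by
      rw [← image_cons_paths hu hwU hadj]
      exact (Set.ncard_image_of_injective _ (Fin.cons_right_injective (α := fun _ ↦ V) u)).symm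
    rw [hfiber, ← Set.ncard_coe_finset]
    simp only [Finset.coe_filter, Set.Finite.mem_toFinset]
  · rintro f hf
    rw [Set.Finite.coe_toFinset] at hf
    obtain ⟨rfl, -, -, hadj, hU⟩ := hf
    exact Finset.mem_filter.2 ⟨hU 0, hadj 0⟩

theorem pathCount_mono [Finite V] (h : G ≤ H) : pathCount G U j u b ≤ pathCount H U j u b :=
  Set.ncard_le_ncard fun _ ⟨h0, hlast, hf, hadj, hU⟩ ↦ ⟨h0, hlast, hf, fun i ↦ h (hadj i), hU⟩

theorem cycleCount_bot (m : ℕ) : cycleCount (⊥ : SimpleGraph V) (m + 3) = 0 := by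
  by_contra h
  obtain ⟨f⟩ := exists_copy_of_cycleCount_ne_zero h
  exact f.toHom.map_adj (cycleGraph_adj_iff.2 (.inl rfl) : (cycleGraph (m + 3)).Adj 0 (0 + 1))

end Paths

section EvalDigits

variable {x n : ℕ} {c c' : ℕ → ℕ}

/-- The number with base-`x` digits `c 0, …, c (n - 1)`, least significant first; the digits are
allowed to exceed `x`. -/
def evalDigits (x n : ℕ) (c : ℕ → ℕ) : ℕ :=
  ∑ j ∈ Finset.range n, c j * x ^ j

theorem evalDigits_zero : evalDigits x 0 c = 0 := rfl

theorem evalDigits_succ :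
    evalDigits x (n + 1) c = c 0 + x * evalDigits x n (fun j ↦ c (j + 1)) := by
  rw [evalDigits, Finset.sum_range_succ', evalDigits, Finset.mul_sum, pow_zero, mul_one, add_comm]
  congr 1
  exact Finset.sum_congr rfl fun j _ ↦ by ring

theorem evalDigits_add :
    evalDigits x n (fun j ↦ c j + c' j) = evalDigits x n c + evalDigits x n c' := by
  simp only [evalDigits, add_mul, Finset.sum_add_distrib]

theorem evalDigits_sum {ι : Type*} (s : Finset ι) (c : ι → ℕ → ℕ) :
    evalDigits x n (fun j ↦ ∑ i ∈ s, c i j) = ∑ i ∈ s, evalDigits x n (c i) := by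
  simp only [evalDigits, Finset.sum_mul]
  exact Finset.sum_comm

theorem evalDigits_congr (h : ∀ j < n, c j = c' j) : evalDigits x n c = evalDigits x n c' :=
  Finset.sum_congr rfl fun j hj ↦ by rw [h j (Finset.mem_range.1 hj)]

/-- The number with `n` base-`x` digits all equal to 1. -/
def repunit (x n : ℕ) : ℕ :=
  (x ^ n - 1) / (x - 1)

theorem evalDigits_const (hx : 2 ≤ x) (k : ℕ) :
    evalDigits x n (fun _ ↦ k) = k * repunit x n := by
  rw [evalDigits, ← Finset.mul_sum, Nat.geomSum_eq hx, repunit]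

theorem digit_eq_of_evalDigits_eq (hc : ∀ j < n, c j < x) (hc' : ∀ j < n, c' j < x)
    (h : evalDigits x n c = evalDigits x n c') : ∀ j < n, c j = c' j := by
  induction n generalizing c c' with
  | zero => simp
  | succ n ih =>
    have h0 := hc 0 n.succ_pos
    have h0' := hc' 0 n.succ_pos
    rw [evalDigits_succ, evalDigits_succ] at h
    have hmod := congrArg (· % x) h
    have hdiv := congrArg (· / x) h
    simp only [Nat.add_mul_mod_self_left, Nat.add_mul_div_left _ _ (Nat.zero_lt_of_lt h0),
      Nat.mod_eq_of_lt, Nat.div_eq_of_lt, h0, h0', zero_add] at hmod hdiv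
    have hsucc := ih (fun j hj ↦ hc _ (Nat.succ_lt_succ hj))
      (fun j hj ↦ hc' _ (Nat.succ_lt_succ hj)) hdiv
    rintro (_ | j) hj
    exacts [hmod, hsucc j (Nat.lt_of_succ_lt_succ hj)]

theorem evalDigits_land {k : ℕ} (hc : ∀ j < n, c j < 2 ^ k) (hc' : ∀ j < n, c' j < 2 ^ k) :
    evalDigits (2 ^ k) n c &&& evalDigits (2 ^ k) n c' =
      evalDigits (2 ^ k) n (fun j ↦ c j &&& c' j) := by
  induction n generalizing c c' with
  | zero => simp only [evalDigits_zero, Nat.and_self]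
  | succ n ih =>
    have h0 := hc 0 n.succ_pos
    have h0' := hc' 0 n.succ_pos
    rw [evalDigits_succ, evalDigits_succ, evalDigits_succ,
      ← ih (fun j hj ↦ hc _ (Nat.succ_lt_succ hj)) (fun j hj ↦ hc' _ (Nat.succ_lt_succ hj))]
    rw [← Nat.mod_add_div (_ &&& _) (2 ^ k), Nat.and_mod_two_pow, Nat.and_div_two_pow]
    simp only [Nat.add_mul_mod_self_left, Nat.add_mul_div_left _ _ (Nat.zero_lt_of_lt h0),
      Nat.mod_eq_of_lt, Nat.div_eq_of_lt, h0, h0', zero_add]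

/-- A test accepting every number whose `n` base-16 digits are at most 2: adding 5 to such digits
produces no digit with the bit 8. -/
def fits (n v : ℕ) : Bool :=
  Nat.beq ((v + 5 * repunit 16 n) &&& (8 * repunit 16 n)) 0

theorem fits_evalDigits (hc : ∀ j < n, c j ≤ 2) : fits n (evalDigits 16 n c) = true := by
  have hbits : evalDigits (2 ^ 4) n (fun j ↦ c j + 5) &&& evalDigits (2 ^ 4) n (fun _ ↦ 8) = 0 := by
    rw [evalDigits_land (fun j hj ↦ by have := hc j hj; omega) (fun _ _ ↦ by decide)]
    refine Finset.sum_eq_zero fun j hj ↦ ?_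
    have hj := hc j (Finset.mem_range.1 hj)
    refine mul_eq_zero_of_left (?_ : c j + 5 &&& 8 = 0) _
    interval_cases c j <;> rfl
  rw [evalDigits_add, evalDigits_const (by decide), evalDigits_const (by decide)] at hbits
  exact Nat.beq_eq.mpr hbits

/-- The number with `n` base-16 digits `0, 0, 2, …, 2`, least significant first. -/
def target (n : ℕ) : ℕ :=
  512 * repunit 16 (n - 2)

theorem evalDigits_eq_target (hn : 2 ≤ n) (h0 : c 0 = 0) (h1 : c 1 = 0)
    (hc : ∀ j < n, 2 ≤ j → c j = 2) : evalDigits 16 n c = target n := by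
  obtain ⟨n, rfl⟩ := Nat.exists_eq_add_of_le' hn
  have htail : evalDigits 16 n (fun j ↦ c (j + 2)) = 2 * repunit 16 n :=
    (evalDigits_congr fun j hj ↦ hc _ (by omega) (by omega)).trans (evalDigits_const (by decide) 2)
  rw [evalDigits_succ, evalDigits_succ, h0, h1, htail, target, Nat.add_sub_cancel]
  ring

end EvalDigits

section CycleDigit

variable {V : Type*} {G : SimpleGraph V} {a b u : V} {x d m j : ℕ} {U : Finset V}

/-- The number of cycles through `j + 1` vertices, indexed by the length of the path that remains of
such a cycle when an edge is removed. -/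
noncomputable def cycleDigit (G : SimpleGraph V) (j : ℕ) : ℕ :=
  if 2 ≤ j then cycleCount G (j + 1) else 0

theorem cycleDigit_of_le (hj : 2 ≤ j) : cycleDigit G j = cycleCount G (j + 1) :=
  if_pos hj

theorem cycleDigit_mono [Finite V] {G H : SimpleGraph V} (h : G ≤ H) (j : ℕ) :
    cycleDigit G j ≤ cycleDigit H j := by
  unfold cycleDigit
  split_ifs
  exacts [cycleCount_mono h _, le_rfl]

theorem cycleDigit_bot : cycleDigit (⊥ : SimpleGraph V) j = 0 := by
  rcases j with _ | _ | m
  exacts [rfl, rfl, cycleCount_bot m]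

theorem pathCount_one_of_not_adj (hadj : ¬G.Adj a b) : pathCount G U 1 a b = 0 := by
  rw [pathCount, Set.eq_empty_of_forall_notMem (s := paths G U 1 a b), Set.ncard_empty]
  rintro f ⟨rfl, rfl, -, h, -⟩
  exact hadj (h 0)

theorem cycleDigit_sup_edge [Fintype V] [DecidableEq V] (hab : a ≠ b) (hadj : ¬G.Adj a b) (j : ℕ) :
    cycleDigit (G ⊔ edge a b) j = cycleDigit G j + pathCount G (Finset.univ.erase a) j a b := by
  rcases j with _ | _ | m
  · rw [pathCount_zero, if_neg hab]
    rfl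
  · rw [pathCount_one_of_not_adj hadj]
    rfl
  · rw [cycleDigit_of_le (by omega), cycleDigit_of_le (by omega)]
    exact cycleCount_sup_edge hab hadj m

theorem evalDigits_cycleDigit_sup_edge [Fintype V] [DecidableEq V] (hab : a ≠ b)
    (hadj : ¬G.Adj a b) :
    evalDigits x d (cycleDigit (G ⊔ edge a b)) = evalDigits x d (cycleDigit G) +
      evalDigits x d (fun j ↦ pathCount G (Finset.univ.erase a) j a b) := by
  rw [← evalDigits_add]
  exact evalDigits_congr fun j _ ↦ cycleDigit_sup_edge hab hadj j

theorem evalDigits_pathCount_self (hu : u ∉ U) :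
    evalDigits x (d + 1) (fun j ↦ pathCount G U j u u) = 1 := by
  classical
  rw [evalDigits_succ, pathCount_zero, if_pos rfl]
  simp [evalDigits, pathCount_succ_self hu]

theorem evalDigits_pathCount_succ [Finite V] [DecidableEq V] [DecidableRel G.Adj] (hu : u ∉ U)
    (hub : u ≠ b) :
    evalDigits x (d + 1) (fun j ↦ pathCount G U j u b) =
      x * ∑ w ∈ U with G.Adj u w, evalDigits x d (fun j ↦ pathCount G (U.erase w) j w b) := by
  simp only [evalDigits_succ, pathCount_zero, if_neg hub, pathCount_succ hu, evalDigits_sum,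
    zero_add]

theorem cycleDigit_eq_of_isRPancyclic [Fintype V] {r : ℕ} (h : IsRPancyclic G r) (hj : 2 ≤ j)
    (hjV : j < Fintype.card V) : cycleDigit G j = r := by
  rw [cycleDigit_of_le hj]
  exact h.2 _ (by omega) hjV

end CycleDigit

section Encoding

variable {n A m U d x : ℕ} {G : SimpleGraph (Fin n)} {a b u v w : Fin n}

/-- `A` encodes the adjacency matrix of `G`: the entry in row `u` and column `v` is the bit of `A`
at position `n * u + v`. -/
def Encodes (A : ℕ) (G : SimpleGraph (Fin n)) : Prop :=
  ∀ u v : Fin n, A.testBit (n * u + v) = true ↔ G.Adj u v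

/-- The code of the graph encoded by `A` with the edge `ab` added. -/
def addEdgeCode (n A a b : ℕ) : ℕ :=
  A ||| (2 ^ (n * a + b) ||| 2 ^ (n * b + a))

theorem encodes_bot : Encodes 0 (⊥ : SimpleGraph (Fin n)) := by
  simp [Encodes]

theorem mul_add_val_inj : n * a + b = n * u + v ↔ a = u ∧ b = v := by
  have h : finProdFinEquiv (a, b) = finProdFinEquiv (u, v) ↔ a = u ∧ b = v := by
    rw [finProdFinEquiv.injective.eq_iff, Prod.mk.injEq]
  rw [← h, Fin.ext_iff, finProdFinEquiv_apply_val, finProdFinEquiv_apply_val, add_comm,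
    add_comm (n * (u : ℕ))]

theorem encodes_addEdgeCode (h : Encodes A G) (hab : a ≠ b) :
    Encodes (addEdgeCode n A a b) (G ⊔ edge a b) := by
  intro u v
  simp only [addEdgeCode, Nat.testBit_or, Bool.or_eq_true, h u v, Nat.testBit_two_pow,
    decide_eq_true_eq, mul_add_val_inj, sup_adj, edge_adj]
  grind

/-- The set of positions of the nonzero binary digits of `m`. -/
def bitSet (n m : ℕ) : Finset (Fin n) :=
  {w | m.testBit w}

theorem mem_bitSet : w ∈ bitSet n m ↔ m.testBit w = true := by
  simp [bitSet]

theorem bitSet_shiftRight_land [DecidableRel G.Adj] (h : Encodes A G) (u : Fin n) (U : ℕ) :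
    bitSet n ((A >>> (n * u)) &&& U) = {w ∈ bitSet n U | G.Adj u w} := by
  ext w
  simp only [mem_bitSet, Nat.testBit_and, Nat.testBit_shiftRight, Bool.and_eq_true, h u w,
    Finset.mem_filter, and_comm]

theorem bitSet_xor_two_pow (hw : w ∈ bitSet n m) :
    bitSet n (m ^^^ 2 ^ (w : ℕ)) = (bitSet n m).erase w := by
  ext v
  rw [mem_bitSet] at hw
  rw [Finset.mem_erase, mem_bitSet, mem_bitSet, Nat.testBit_xor, Nat.testBit_two_pow]
  by_cases hvw : v = w
  · simp [hvw, hw]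
  · simp [hvw, Fin.val_ne_of_ne (Ne.symm hvw)]

theorem bitSet_two_pow_sub_one : bitSet n (2 ^ n - 1) = Finset.univ := by
  ext w
  simp [mem_bitSet, Nat.testBit_two_pow_sub_one]

theorem exists_log2_eq (hm : m ≠ 0) (hmn : m < 2 ^ n) : ∃ w ∈ bitSet n m, m.log2 = w :=
  ⟨⟨m.log2, (Nat.log2_lt hm).2 hmn⟩, mem_bitSet.2 (Nat.testBit_log2 hm), rfl⟩

/-- Application of `f` to `k`, in a form that makes the kernel evaluate `k` to a numeral before it
is substituted into the body of `f`. -/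
noncomputable def force {α : Type*} (k : ℕ) (f : ℕ → α) : α :=
  Nat.rec (f 0) (fun k _ ↦ f k) (k + 1)

theorem force_eq {α : Type*} (k : ℕ) (f : ℕ → α) : force k f = f k := rfl

/-- The sum of `f` over the positions of the nonzero binary digits of `m`, of which there should be
at most `d`. -/
noncomputable def sumBits (f : ℕ → ℕ) (d : ℕ) : ℕ → ℕ :=
  Nat.rec (fun _ ↦ 0)
    (fun _ ih m ↦ Nat.rec 0
      (fun _ _ ↦ force m.log2 fun w ↦ force (m ^^^ 2 ^ w) fun m' ↦ f w + ih m') m)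
    d

theorem sumBits_eq (f : ℕ → ℕ) (hm : m < 2 ^ n) (hd : (bitSet n m).card ≤ d) :
    sumBits f d m = ∑ w ∈ bitSet n m, f w := by
  induction d generalizing m with
  | zero => rw [Finset.card_eq_zero.1 (Nat.le_zero.1 hd), Finset.sum_empty]; rfl
  | succ d ih =>
    rcases Nat.eq_zero_or_pos m with rfl | hpos
    · simp [bitSet, sumBits]
    · obtain ⟨w, hw, hlog⟩ := exists_log2_eq hpos.ne' hm
      have hstep : sumBits f (d + 1) m = f m.log2 + sumBits f d (m ^^^ 2 ^ m.log2) := by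
        obtain ⟨k, rfl⟩ := Nat.exists_eq_succ_of_ne_zero hpos.ne'
        rfl
      have herase := bitSet_xor_two_pow hw
      rw [hstep, hlog, ih (Nat.xor_lt_two_pow hm (Nat.pow_lt_pow_right one_lt_two w.2)), herase,
        Finset.add_sum_erase _ (fun v : Fin n ↦ f v) hw]
      rw [herase, Finset.card_erase_of_mem hw]
      omega

/-- The value at `x` of the generating polynomial of the paths from `u` to `b` with fewer than `d`
edges in the graph encoded by `A`, whose vertices after `u` lie in the set encoded by `U`.
It is written with recursors because these reduce fastest in the kernel. -/
noncomputable def pathValue (n A b x d : ℕ) : ℕ → ℕ → ℕ :=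
  Nat.rec (fun _ _ ↦ 0)
    (fun _ ih U u ↦ Bool.rec
      (force ((A >>> (n * u)) &&& U) fun m ↦
        x * sumBits (fun w ↦ force (U ^^^ 2 ^ w) fun U' ↦ ih U' w) n m)
      1 (Nat.beq u b))
    d

theorem pathValue_succ {b u : ℕ} :
    pathValue n A b x (d + 1) U u = if u = b then 1 else
      x * sumBits (fun w ↦ pathValue n A b x d (U ^^^ 2 ^ w) w) n ((A >>> (n * u)) &&& U) := by
  change (Bool.rec (force _ fun m ↦ x * sumBits (fun w ↦ force _ fun U' ↦
    pathValue n A b x d U' w) n m) 1 (Nat.beq u b) : ℕ) = _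
  simp only [force_eq]
  cases h : Nat.beq u b
  · exact (if_neg (Nat.ne_of_beq_eq_false h)).symm
  · exact (if_pos (Nat.eq_of_beq_eq_true h)).symm

theorem pathValue_eq (hA : Encodes A G) (hU : U < 2 ^ n) (hu : u ∉ bitSet n U) :
    pathValue n A b x d U u = evalDigits x d fun j ↦ pathCount G (bitSet n U) j u b := by
  classical
  induction d generalizing U u with
  | zero => rfl
  | succ d ih =>
    rw [pathValue_succ]
    by_cases hub : u = b
    · subst hub
      rw [if_pos rfl, evalDigits_pathCount_self hu]
    · rw [if_neg (Fin.val_ne_of_ne hub), evalDigits_pathCount_succ hu hub,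
        sumBits_eq _ (Nat.and_lt_two_pow _ hU)
          ((Finset.card_le_univ _).trans_eq (Fintype.card_fin n)), bitSet_shiftRight_land hA]
      congr 1
      refine Finset.sum_congr rfl fun w hw ↦ ?_
      have hwU := Finset.mem_of_mem_filter w hw
      have hpow : 2 ^ (w : ℕ) < 2 ^ n := Nat.pow_lt_pow_right one_lt_two w.2
      have herase := bitSet_xor_two_pow hwU
      rw [ih (Nat.xor_lt_two_pow hU hpow), herase]
      rw [herase]
      exact Finset.notMem_erase w _

/-- The value at `x` of the generating polynomial of the paths from `a` to `b` in the graph encoded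
by `A`. -/
noncomputable def chordValue (n A x a b : ℕ) : ℕ :=
  pathValue n A b x n ((2 ^ n - 1) ^^^ 2 ^ a) a

theorem chordValue_eq (hA : Encodes A G) (a b : Fin n) :
    chordValue n A x a b = evalDigits x n fun j ↦ pathCount G (Finset.univ.erase a) j a b := by
  have ha : bitSet n ((2 ^ n - 1) ^^^ 2 ^ (a : ℕ)) = Finset.univ.erase a := by
    rw [bitSet_xor_two_pow (by simp [bitSet_two_pow_sub_one]), bitSet_two_pow_sub_one]
  rw [chordValue, pathValue_eq hA, ha]
  · exact Nat.xor_lt_two_pow (Nat.sub_lt (by positivity) one_pos)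
      (Nat.pow_lt_pow_right one_lt_two a.2)
  · simp [ha]

end Encoding

section Search

variable {n A v d : ℕ} {G H : SimpleGraph (Fin n)} {a b : Fin n}

/-- The graph obtained from `H` by adding the listed edges. -/
def addEdges {V : Type*} (H : SimpleGraph V) (es : List (V × V)) : SimpleGraph V :=
  es.foldl (fun G e ↦ G ⊔ edge e.1 e.2) H

/-- A possible new chord `ab`, listed as `(δ, a, b)`, is discarded if the digits show that adding it
to the graph encoded by `A`, whose cycles are counted by `v`, creates three cycles of some length.
Otherwise `δ` is replaced by the number whose base-16 digits count the cycles created by `ab`. As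
these counts only grow with the graph, the test can be tried on the old value of `δ` first. -/
noncomputable def refresh (n A v : ℕ) :
    ℕ × Fin n × Fin n → Option (ℕ × Fin n × Fin n)
  | (δ, a, b) =>
    bif fits n (v + δ) then
      force (chordValue n A 16 a b) fun δ' ↦
        bif fits n (v + δ') then some (δ', a, b) else none
    else none

/-- The lists of at most `d` chords, taken from `cs` in this order, whose addition to the graph
encoded by `A` produces the cycle counts `target n`; the given graph has the cycle counts `v`. -/
noncomputable def search (n : ℕ) :
    ℕ → ℕ → ℕ → List (ℕ × Fin n × Fin n) → List (List (Fin n × Fin n))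
  | 0, _, v, _ => bif Nat.beq v (target n) then [[]] else []
  | d + 1, A, v, cs =>
    (bif Nat.beq v (target n) then [[]] else []) ++
      (cs.filterMap (refresh n A v)).tails.flatMap fun
        | [] => []
        | (δ, a, b) :: cs =>
          (search n d (addEdgeCode n A a b) (v + δ) cs).map ((a, b) :: ·)

/-- The first component of the chord `(δ, a, b)` is a digitwise lower bound for the numbers of paths
between `a` and `b` in `H`. -/
def IsStale (H : SimpleGraph (Fin n)) (c : ℕ × Fin n × Fin n) : Prop :=
  ∃ k : ℕ → ℕ, c.1 = evalDigits 16 n k ∧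
    ∀ j, k j ≤ pathCount H (Finset.univ.erase c.2.1) j c.2.1 c.2.2

theorem isStale_mono (h : H ≤ G) {c : ℕ × Fin n × Fin n} (hc : IsStale H c) : IsStale G c :=
  let ⟨k, hk, hle⟩ := hc
  ⟨k, hk, fun j ↦ (hle j).trans (pathCount_mono h)⟩

theorem fst_eq_chordValue_of_refresh_eq_some {c c' : ℕ × Fin n × Fin n}
    (h : refresh n A v c = some c') : c'.1 = chordValue n A 16 c'.2.1 c'.2.2 := by
  obtain ⟨δ, a, b⟩ := c
  simp only [refresh, force_eq, cond_eq_ite, Option.ite_none_right_eq_some, Option.some.injEq] at h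
  rw [← h.2.2]

theorem cycleDigit_le_of_isRPancyclic {r : ℕ} (hG : IsRPancyclic G r) {j : ℕ} (hj : j < n) :
    cycleDigit G j ≤ r := by
  rcases le_or_gt 2 j with h | h
  · exact (cycleDigit_eq_of_isRPancyclic hG h (by rwa [Fintype.card_fin])).le
  · rw [cycleDigit, if_neg h.not_ge]
    exact Nat.zero_le r

theorem refresh_eq_some (hG : IsRPancyclic G 2) (hHG : H ≤ G) (hA : Encodes A H)
    (hGab : G.Adj a b) (hHab : ¬H.Adj a b) {δ : ℕ} (hδ : IsStale H (δ, a, b)) :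
    refresh n A (evalDigits 16 n (cycleDigit H)) (δ, a, b) =
      some (chordValue n A 16 a b, a, b) := by
  have hle : H ⊔ edge a b ≤ G := sup_le hHG ((edge_le_iff G).2 (.inr hGab))
  have hdigit : ∀ j < n, cycleDigit H j + pathCount H (Finset.univ.erase a) j a b ≤ 2 := by
    intro j hj
    rw [← cycleDigit_sup_edge hGab.ne hHab]
    exact (cycleDigit_mono hle j).trans (cycleDigit_le_of_isRPancyclic hG hj)
  obtain ⟨k, rfl, hk⟩ := hδ
  simp only [refresh, force_eq, chordValue_eq hA, ← evalDigits_add]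
  rw [fits_evalDigits fun j hj ↦ (Nat.add_le_add_left (hk j) _).trans (hdigit j hj),
    fits_evalDigits hdigit, cond_true, cond_true]

theorem exists_cons_suffix_of_mem {α : Type*} {p : α → Prop} {l : List α} (h : ∃ x ∈ l, p x) :
    ∃ x l', p x ∧ x :: l' <:+ l ∧ ∀ y ∈ l, p y → y ∈ x :: l' := by
  induction l with
  | nil => simp at h
  | cons x l ih =>
    by_cases hx : p x
    · exact ⟨x, l, hx, List.suffix_rfl, fun y hy _ ↦ hy⟩
    · obtain ⟨y, l', hy, hsuf, hmem⟩ := ih (by simpa [hx] using h)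
      exact ⟨y, l', hy, hsuf.trans (List.suffix_cons x l), by simpa [hx] using hmem⟩

theorem ncard_edgeSet_sup_edge {V : Type*} [Finite V] {G : SimpleGraph V} {a b : V} (hab : a ≠ b)
    (hadj : ¬G.Adj a b) : (G ⊔ edge a b).edgeSet.ncard = G.edgeSet.ncard + 1 := by
  rw [edgeSet_sup, edgeSet_edge_of_ne hab, Set.union_singleton,
    Set.ncard_insert_of_notMem (by simpa using hadj)]

theorem evalDigits_cycleDigit_eq_target (hG : IsRPancyclic G 2) :
    evalDigits 16 n (cycleDigit G) = target n := by
  have hn : 3 ≤ n := hG.1.trans_eq (Fintype.card_fin n)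
  exact evalDigits_eq_target (by omega) rfl rfl fun j hj h ↦
    cycleDigit_eq_of_isRPancyclic hG h (by rwa [Fintype.card_fin])

theorem nil_mem_search (cs : List (ℕ × Fin n × Fin n)) : [] ∈ search n d A (target n) cs := by
  cases d <;> simp [search]

theorem cons_mem_search {cs l : List (ℕ × Fin n × Fin n)} {S : List (Fin n × Fin n)} {δ : ℕ}
    (hl : (δ, a, b) :: l <:+ cs.filterMap (refresh n A v))
    (hS : S ∈ search n d (addEdgeCode n A a b) (v + δ) l) :
    (a, b) :: S ∈ search n (d + 1) A v cs := by
  refine List.mem_append_right _ (List.mem_flatMap.2 ⟨_, (List.mem_tails ..).2 hl, ?_⟩)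
  exact List.mem_map_of_mem hS

theorem exists_first_new_chord (hG : IsRPancyclic G 2) (hHG : H < G) (hA : Encodes A H)
    {cs : List (ℕ × Fin n × Fin n)} (hcs : ∀ c ∈ cs, IsStale H c)
    (hcover : ∀ e ∈ G.edgeSet \ H.edgeSet, ∃ c ∈ cs, s(c.2.1, c.2.2) = e) :
    ∃ (a b : Fin n) (l : List (ℕ × Fin n × Fin n)), G.Adj a b ∧ ¬H.Adj a b ∧
      (chordValue n A 16 a b, a, b) :: l <:+
        cs.filterMap (refresh n A (evalDigits 16 n (cycleDigit H))) ∧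
      (∀ c ∈ l, IsStale H c) ∧
      ∀ e ∈ G.edgeSet \ (H ⊔ edge a b).edgeSet, ∃ c ∈ l, s(c.2.1, c.2.2) = e := by
  set cs' := cs.filterMap (refresh n A (evalDigits 16 n (cycleDigit H)))
  have hvalue : ∀ c ∈ cs', c.1 = chordValue n A 16 c.2.1 c.2.2 := fun c hc ↦
    let ⟨_, _, h⟩ := List.mem_filterMap.1 hc
    fst_eq_chordValue_of_refresh_eq_some h
  have hcover' : ∀ e ∈ G.edgeSet \ H.edgeSet, ∃ c ∈ cs', s(c.2.1, c.2.2) = e := by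
    intro e he
    obtain ⟨⟨δ, a, b⟩, hc, rfl⟩ := hcover e he
    exact ⟨_, List.mem_filterMap.2 ⟨_, hc, refresh_eq_some hG hHG.le hA he.1 he.2 (hcs _ hc)⟩, rfl⟩
  obtain ⟨e, he⟩ := Set.exists_of_ssubset (edgeSet_ssubset_edgeSet.2 hHG)
  obtain ⟨c, hc, rfl⟩ := hcover' e he
  obtain ⟨⟨δ, a, b⟩, l, hnew, hl, hmem⟩ := exists_cons_suffix_of_mem
    (p := fun c : ℕ × Fin n × Fin n ↦ s(c.2.1, c.2.2) ∈ G.edgeSet \ H.edgeSet) ⟨c, hc, he⟩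
  obtain rfl : δ = chordValue n A 16 a b := hvalue _ (hl.subset List.mem_cons_self)
  refine ⟨a, b, l, hnew.1, hnew.2, hl, fun c hc ↦ ?_, fun e he ↦ ?_⟩
  · exact ⟨_, (hvalue c (hl.subset (List.mem_cons_of_mem _ hc))).trans (chordValue_eq hA ..),
      fun j ↦ le_rfl⟩
  · rw [edgeSet_sup, edgeSet_edge_of_ne (show a ≠ b from Adj.ne hnew.1), ← Set.sdiff_sdiff] at he
    obtain ⟨c, hc, rfl⟩ := hcover' e he.1
    refine ⟨c, (List.mem_cons.1 (hmem c hc he.1)).resolve_left ?_, rfl⟩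
    rintro rfl
    exact he.2 rfl

theorem exists_mem_search (hG : IsRPancyclic G 2) (hHG : H ≤ G) (hA : Encodes A H)
    (hcard : G.edgeSet.ncard ≤ H.edgeSet.ncard + d) {cs : List (ℕ × Fin n × Fin n)}
    (hcs : ∀ c ∈ cs, IsStale H c)
    (hcover : ∀ e ∈ G.edgeSet \ H.edgeSet, ∃ c ∈ cs, s(c.2.1, c.2.2) = e) :
    ∃ S ∈ search n d A (evalDigits 16 n (cycleDigit H)) cs, addEdges H S = G := by
  induction d generalizing H A cs with
  | zero =>
    obtain rfl : H = G :=
      edgeSet_injective (Set.eq_of_subset_of_ncard_le (edgeSet_mono hHG) hcard)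
    exact ⟨[], evalDigits_cycleDigit_eq_target hG ▸ nil_mem_search cs, rfl⟩
  | succ d ih =>
    rcases hHG.eq_or_lt with rfl | hlt
    · exact ⟨[], evalDigits_cycleDigit_eq_target hG ▸ nil_mem_search cs, rfl⟩
    obtain ⟨a, b, l, hGab, hHab, hl, hstale, hcover'⟩ :=
      exists_first_new_chord hG hlt hA hcs hcover
    have hcard' : G.edgeSet.ncard ≤ (H ⊔ edge a b).edgeSet.ncard + d := by
      rw [ncard_edgeSet_sup_edge hGab.ne hHab]
      omega
    obtain ⟨S, hS, hSG⟩ := ih (sup_le hHG ((edge_le_iff G).2 (.inr hGab)))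
      (encodes_addEdgeCode hA hGab.ne) hcard' (fun c hc ↦ isStale_mono le_sup_left (hstale c hc))
      hcover'
    refine ⟨(a, b) :: S, cons_mem_search hl ?_, hSG⟩
    rwa [chordValue_eq hA, ← evalDigits_cycleDigit_sup_edge hGab.ne hHab]

end Search

section EdgeList

variable {V : Type*} {H : SimpleGraph V} {es : List (V × V)} {a b u v : V}

theorem addEdges_adj :
    (addEdges H es).Adj u v ↔ H.Adj u v ∨ u ≠ v ∧ ∃ e ∈ es, s(e.1, e.2) = s(u, v) := by
  induction es generalizing H with
  | nil => simp [addEdges]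
  | cons e es ih =>
    change (addEdges (H ⊔ edge e.1 e.2) es).Adj u v ↔ _
    rw [ih, sup_adj, edge_adj, List.exists_mem_cons_iff, Sym2.eq_iff]
    grind

instance [DecidableEq V] [DecidableRel H.Adj] : DecidableRel (addEdges H es).Adj :=
  fun _ _ ↦ decidable_of_iff' _ addEdges_adj

/-- The pairs in `es` are distinct edges, none of which is an edge of `H`. -/
def AreNewEdges (H : SimpleGraph V) (es : List (V × V)) : Prop :=
  (es.map fun e ↦ s(e.1, e.2)).Nodup ∧ ∀ e ∈ es, e.1 ≠ e.2 ∧ ¬H.Adj e.1 e.2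

theorem areNewEdges_sup_edge (h : AreNewEdges H ((a, b) :: es)) :
    AreNewEdges (H ⊔ edge a b) es := by
  rw [AreNewEdges, List.map_cons, List.nodup_cons] at h
  refine ⟨h.1.2, fun e he ↦ ⟨(h.2 e (.tail _ he)).1, ?_⟩⟩
  rw [sup_adj, edge_adj]
  rintro (hadj | ⟨heq, -⟩)
  · exact (h.2 e (.tail _ he)).2 hadj
  · exact h.1.1 (List.mem_map.2 ⟨e, he, Sym2.eq_iff.2 heq⟩)

theorem ncard_edgeSet_addEdges [Finite V] (h : AreNewEdges H es) :
    (addEdges H es).edgeSet.ncard = H.edgeSet.ncard + es.length := by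
  induction es generalizing H with
  | nil => rfl
  | cons e es ih =>
    obtain ⟨hab, hadj⟩ := h.2 e List.mem_cons_self
    change (addEdges (H ⊔ edge e.1 e.2) es).edgeSet.ncard = _
    rw [ih (areNewEdges_sup_edge h), ncard_edgeSet_sup_edge hab hadj, List.length_cons]
    omega

variable {n x A r : ℕ}

/-- The code of the graph encoded by `A` with the listed edges added. -/
def addEdgesCode (n A : ℕ) (es : List (Fin n × Fin n)) : ℕ :=
  es.foldl (fun A e ↦ addEdgeCode n A e.1 e.2) A

/-- The sum of the values `chordValue` of the listed edges when these are added one by one to the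
graph encoded by `A`. -/
noncomputable def chordsValue (n x : ℕ) : ℕ → List (Fin n × Fin n) → ℕ
  | _, [] => 0
  | A, e :: es => chordValue n A x e.1 e.2 + chordsValue n x (addEdgeCode n A e.1 e.2) es

variable {H : SimpleGraph (Fin n)} {es : List (Fin n × Fin n)}

theorem encodes_addEdgesCode (hA : Encodes A H) (h : ∀ e ∈ es, e.1 ≠ e.2) :
    Encodes (addEdgesCode n A es) (addEdges H es) := by
  induction es generalizing A H with
  | nil => exact hA
  | cons e es ih =>
    exact ih (encodes_addEdgeCode hA (h e List.mem_cons_self)) fun e he ↦ h e (.tail _ he)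

theorem evalDigits_cycleDigit_addEdges (hA : Encodes A H) (h : AreNewEdges H es) :
    evalDigits x n (cycleDigit (addEdges H es)) =
      evalDigits x n (cycleDigit H) + chordsValue n x A es := by
  induction es generalizing A H with
  | nil => rfl
  | cons e es ih =>
    obtain ⟨hab, hadj⟩ := h.2 e List.mem_cons_self
    change evalDigits x n (cycleDigit (addEdges (H ⊔ edge e.1 e.2) es)) = _
    rw [ih (encodes_addEdgeCode hA hab) (areNewEdges_sup_edge h),
      evalDigits_cycleDigit_sup_edge hab hadj, ← chordValue_eq hA, chordsValue, add_assoc]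

theorem chordsValue_eq (h : AreNewEdges ⊥ es) :
    chordsValue n x 0 es = evalDigits x n (cycleDigit (addEdges ⊥ es)) := by
  rw [evalDigits_cycleDigit_addEdges encodes_bot h, evalDigits,
    Finset.sum_eq_zero fun j _ ↦ by rw [cycleDigit_bot, zero_mul], zero_add]

-- The value at 1 is the total number of cycles, which bounds the digits of the value at `x`.
theorem isRPancyclic_addEdges (hn : 3 ≤ n) (h : AreNewEdges ⊥ es) (hr : r < x)
    (hx : chordsValue n 1 0 es < x)
    (hvalue : chordsValue n x 0 es = evalDigits x n fun j ↦ if 2 ≤ j then r else 0) :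
    IsRPancyclic (addEdges ⊥ es) r := by
  rw [chordsValue_eq h] at hx hvalue
  have hdigit : ∀ j < n, cycleDigit (addEdges ⊥ es) j < x := fun j hj ↦ by
    refine lt_of_le_of_lt ?_ hx
    simpa only [evalDigits, one_pow, mul_one] using Finset.single_le_sum
      (f := fun j ↦ cycleDigit (addEdges ⊥ es) j * 1 ^ j) (fun _ _ ↦ Nat.zero_le _)
      (Finset.mem_range.2 hj)
  have heq := digit_eq_of_evalDigits_eq hdigit (fun j _ ↦ by split_ifs <;> omega) hvalue
  refine ⟨by rwa [Fintype.card_fin], fun k hk hkn ↦ ?_⟩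
  rw [Fintype.card_fin] at hkn
  obtain ⟨j, rfl⟩ := Nat.exists_eq_add_of_le' (show 1 ≤ k by omega)
  rw [← cycleDigit_of_le (by omega), heq j (by omega), if_pos (by omega)]

end EdgeList

section Span

variable {n m r : ℕ} {u v : Fin n}

/-- The distance between `u` and `v` along the cycle `0, 1, …, n - 1`. -/
def span (u v : Fin n) : ℕ :=
  min (v - u).val (u - v).val

theorem span_comm : span u v = span v u :=
  min_comm ..

theorem val_sub_add_val_sub_le (u v : Fin n) : (v - u).val + (u - v).val ≤ n := by
  have : NeZero n := ⟨by have := u.2; omega⟩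
  rw [← neg_sub v u, Fin.val_neg]
  have := (v - u).2
  split_ifs with h
  · simp [h]
  · omega

theorem two_le_span {u v : Fin (m + 3)} (hne : u ≠ v) (hadj : ¬(cycleGraph (m + 3)).Adj u v) :
    2 ≤ span u v := by
  have hval : ∀ {w : Fin (m + 3)}, w ≠ 0 → w ≠ 1 → 2 ≤ w.val := by
    intro w h0 h1
    rw [Ne, Fin.ext_iff, Fin.val_zero] at h0
    rw [Ne, Fin.ext_iff, Fin.val_one] at h1
    omega
  rw [cycleGraph_adj_iff, not_or] at hadj
  refine le_min (hval (sub_ne_zero.2 hne.symm) ?_) (hval (sub_ne_zero.2 hne) ?_)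
  · exact fun h ↦ hadj.1 (sub_eq_iff_eq_add'.1 h)
  · exact fun h ↦ hadj.2 (sub_eq_iff_eq_add'.1 h)

theorem isRPancyclic_congr {V W : Type*} [Fintype V] [Fintype W] {G : SimpleGraph V}
    {H : SimpleGraph W} (e : G ≃g H) : IsRPancyclic G r ↔ IsRPancyclic H r := by
  simp only [IsRPancyclic, Fintype.card_congr e.toEquiv, cycleCount_congr e]

theorem ncard_edgeSet_congr {V W : Type*} {G : SimpleGraph V} {H : SimpleGraph W} (e : G ≃g H) :
    G.edgeSet.ncard = H.edgeSet.ncard :=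
  Nat.card_congr e.mapEdgeSet

theorem exists_cycleGraph_le_iso {W : Type*} [Fintype W] {G : SimpleGraph W}
    (hn : Fintype.card W = n) (hr : r ≠ 0) (hG : IsRPancyclic G r) :
    ∃ H : SimpleGraph (Fin n), cycleGraph n ≤ H ∧ Nonempty (G ≃g H) := by
  subst hn
  obtain ⟨f⟩ := exists_copy_of_cycleCount_ne_zero ((hG.2 _ hG.1 le_rfl).trans_ne hr)
  have hf : Function.Bijective f :=
    (Fintype.bijective_iff_injective_and_card f).2 ⟨f.injective, Fintype.card_fin _⟩
  exact ⟨G.comap (Equiv.ofBijective f hf), fun _ _ h ↦ f.toHom.map_rel h,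
    ⟨(Iso.comap (Equiv.ofBijective f hf) G).symm⟩⟩

/-- `G` contains the cycle `0, 1, …, n - 1` as well as the chord `0l`, which is a longest one. -/
structure IsNormalized {m : ℕ} (G : SimpleGraph (Fin (m + 3))) (l : Fin (m + 3)) : Prop where
  cycleGraph_le : cycleGraph (m + 3) ≤ G
  adj : G.Adj 0 l
  two_le : 2 ≤ l.val
  two_mul_le : 2 * l.val ≤ m + 3
  span_le : ∀ ⦃u v⦄, G.Adj u v → span u v ≤ l.val

theorem exists_adj_span_max {G : SimpleGraph (Fin n)} (h : G ≠ ⊥) :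
    ∃ u v, G.Adj u v ∧ (v - u).val = span u v ∧ ∀ ⦃a b⦄, G.Adj a b → span a b ≤ span u v := by
  classical
  obtain ⟨u₀, v₀, h₀⟩ := ne_bot_iff_exists_adj.1 h
  obtain ⟨⟨u, v⟩, huv, hmax⟩ := Finset.exists_max_image
    {e : Fin n × Fin n | G.Adj e.1 e.2} (fun e ↦ span e.1 e.2) ⟨(u₀, v₀), by simpa using h₀⟩
  simp only [Finset.mem_filter_univ, Prod.forall] at huv hmax
  rcases min_choice (v - u).val (u - v).val with huv' | hvu'
  · exact ⟨u, v, huv, huv'.symm, hmax⟩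
  · exact ⟨v, u, huv.symm, hvu'.symm.trans span_comm, span_comm (u := u) ▸ hmax⟩

theorem exists_isNormalized {G : SimpleGraph (Fin (m + 3))} (h : cycleGraph (m + 3) < G) :
    ∃ (H : SimpleGraph (Fin (m + 3))) (l : Fin (m + 3)), Nonempty (G ≃g H) ∧ IsNormalized H l := by
  obtain ⟨a, b, hab, hab'⟩ : ∃ a b, G.Adj a b ∧ ¬(cycleGraph (m + 3)).Adj a b := by
    by_contra! hle
    exact h.not_ge fun u v ↦ hle u v
  obtain ⟨u, v, huv, hspan, hmax⟩ := exists_adj_span_max (G := G) (by rintro rfl; exact hab)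
  refine ⟨G.comap (Equiv.addRight u), v - u, ⟨(Iso.comap (Equiv.addRight u) G).symm⟩,
    fun a b hab ↦ h.le ?_, ?_, ?_, ?_, fun a b hab ↦ ?_⟩
  · rw [cycleGraph_adj_iff] at hab ⊢
    simpa only [Equiv.coe_addRight, add_right_comm _ u, add_left_inj] using hab
  · simpa only [comap_adj, Equiv.coe_addRight, zero_add, sub_add_cancel] using huv
  · exact hspan ▸ (two_le_span hab.ne hab').trans (hmax hab)
  · have hle := hspan.trans_le (min_le_right ..)
    have hsum := val_sub_add_val_sub_le u v
    omega
  · rw [hspan]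
    simpa only [span, Equiv.coe_addRight, add_sub_add_right_eq_sub] using hmax hab

end Span

section ChordSearch

variable {m : ℕ} {G : SimpleGraph (Fin (m + 3))} {l : Fin (m + 3)}

/-- The edges of the cycle `0, 1, …, n - 1`. -/
def rim (n : ℕ) [NeZero n] : List (Fin n × Fin n) :=
  (List.finRange n).map fun u ↦ (u, u + 1)

theorem addEdges_rim : addEdges ⊥ (rim (m + 3)) = cycleGraph (m + 3) := by
  ext u v
  rw [addEdges_adj, cycleGraph_adj_iff]
  simp only [bot_adj, false_or, rim, List.mem_map, List.mem_finRange, true_and,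
    exists_exists_eq_and, Sym2.eq_iff]
  constructor
  · rintro ⟨-, w, ⟨rfl, rfl⟩ | ⟨rfl, rfl⟩⟩ <;> simp
  · rintro (rfl | rfl)
    · exact ⟨by simp, u, .inl ⟨rfl, rfl⟩⟩
    · exact ⟨by simp, v, .inr ⟨rfl, rfl⟩⟩

/-- The edges of the cycle `0, 1, …, n - 1`, followed by the chord `0l` and the chords in `es`. -/
def rimWithChords {n : ℕ} [NeZero n] (l : Fin n) (es : List (Fin n × Fin n)) :
    List (Fin n × Fin n) :=
  rim n ++ (0, l) :: es

/-- The chords other than `0l` of span at most `l`. Long chords come first because they create more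
cycles, which prunes the search earlier. -/
def otherChords {n : ℕ} [NeZero n] (l : Fin n) : List (Fin n × Fin n) :=
  (List.range' 2 (l.val - 1)).reverse.flatMap fun k ↦
    (List.finRange n ×ˢ List.finRange n).filter fun (a, b) ↦
      b < a ∧ span a b = k ∧ (a, b) ≠ (l, 0)

/-- The lists of at most `d` chords which together with the chord `0l` may make the cycle
`0, 1, …, n - 1` into a graph with two cycles of every length. -/
noncomputable def chordSearch {n : ℕ} [NeZero n] (l : Fin n) (d : ℕ) :
    List (List (Fin n × Fin n)) :=
  search n d (addEdgesCode n 0 (rimWithChords l [])) (chordsValue n 16 0 (rimWithChords l []))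
    ((otherChords l).map (0, ·))

theorem areNewEdges_rim : AreNewEdges ⊥ (rim (m + 3)) := by
  refine ⟨?_, by simp [rim]⟩
  rw [rim, List.map_map]
  refine (List.nodup_finRange _).map fun u v huv ↦ ?_
  rcases Sym2.eq_iff.1 huv with h | ⟨rfl, h⟩
  · exact h.1
  · have h2 : (1 + 1 : Fin (m + 3)) = 0 := add_eq_left.1 ((add_assoc v 1 1).symm.trans h)
    exact absurd h2 nofun

theorem not_adj_of_two_le_val (h2 : 2 ≤ l.val) (hl : 2 * l.val ≤ m + 3) :
    ¬(cycleGraph (m + 3)).Adj 0 l := by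
  rw [cycleGraph_adj_iff]
  rintro (rfl | h)
  · simp at h2
  · rw [eq_neg_of_add_eq_zero_left h.symm, ← last_eq_neg_one, Fin.val_last] at hl
    omega

theorem areNewEdges_rimWithChords_nil (h2 : 2 ≤ l.val) (hl : 2 * l.val ≤ m + 3) :
    AreNewEdges ⊥ (rimWithChords l []) := by
  have hadj := not_adj_of_two_le_val h2 hl
  rw [← addEdges_rim, addEdges_adj] at hadj
  have h0 : (0 : Fin (m + 3)) ≠ l := by rintro rfl; simp at h2
  constructor
  · rw [rimWithChords, List.map_append, List.nodup_append']
    refine ⟨areNewEdges_rim.1, List.nodup_singleton _, ?_⟩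
    simpa [h0] using hadj
  · intro e he
    rcases List.mem_append.1 he with he | he
    · exact areNewEdges_rim.2 e he
    · simp_all

theorem addEdges_rimWithChords (es : List (Fin (m + 3) × Fin (m + 3))) :
    addEdges ⊥ (rimWithChords l es) = addEdges (cycleGraph (m + 3) ⊔ edge 0 l) es := by
  rw [← addEdges_rim, addEdges, rimWithChords, List.foldl_append]
  rfl

theorem exists_mem_otherChords (hl : IsNormalized G l) {e : Sym2 (Fin (m + 3))}
    (he : e ∈ G.edgeSet \ (cycleGraph (m + 3) ⊔ edge 0 l).edgeSet) :
    ∃ c ∈ otherChords l, s(c.1, c.2) = e := by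
  induction e with | _ u v
  wlog hvu : v < u generalizing u v
  · rw [Sym2.eq_swap] at he ⊢
    exact this v u he ((not_lt.1 hvu).lt_of_ne he.1.ne')
  have hadj : ¬(cycleGraph (m + 3)).Adj u v := fun h ↦ he.2 (.inl h)
  have hne : (u, v) ≠ (l, 0) := by
    rintro ⟨⟩
    exact he.2 (.inr ((edge_adj ..).2 ⟨.inr ⟨rfl, rfl⟩, hvu.ne'⟩))
  refine ⟨(u, v), ?_, rfl⟩
  have hspan := two_le_span hvu.ne' hadj
  have hle : span u v ≤ l.val := hl.span_le he.1
  simp only [otherChords, List.mem_flatMap, List.mem_reverse, List.mem_range'_1, List.mem_filter,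
    List.mem_product, List.mem_finRange, true_and, decide_eq_true_eq]
  exact ⟨span u v, by omega, hvu, rfl, hne⟩

theorem exists_mem_chordSearch (hG : IsRPancyclic G 2) (hl : IsNormalized G l) {d : ℕ}
    (hcard : G.edgeSet.ncard ≤ m + 4 + d) :
    ∃ S ∈ chordSearch l d, addEdges ⊥ (rimWithChords l S) = G := by
  have hnew := areNewEdges_rimWithChords_nil hl.two_le hl.two_mul_le
  have hH : addEdges ⊥ (rimWithChords l []) = cycleGraph (m + 3) ⊔ edge 0 l :=
    addEdges_rimWithChords []
  have hA := encodes_addEdgesCode encodes_bot fun e he ↦ (hnew.2 e he).1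
  have hncard := ncard_edgeSet_addEdges hnew
  have hvalue := chordsValue_eq (x := 16) hnew
  rw [hH] at hA hncard hvalue
  rw [edgeSet_bot, Set.ncard_empty, zero_add, rimWithChords, rim, List.length_append,
    List.length_map, List.length_finRange, List.length_singleton] at hncard
  simp only [addEdges_rimWithChords, chordSearch, hvalue]
  refine exists_mem_search hG (sup_le hl.cycleGraph_le ((edge_le_iff G).2 (.inr hl.adj))) hA
    (hcard.trans_eq (by rw [hncard])) (fun c hc ↦ ?_) fun e he ↦ ?_
  · obtain ⟨e, -, rfl⟩ := List.mem_map.1 hc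
    exact ⟨fun _ ↦ 0, by simp [evalDigits], fun _ ↦ Nat.zero_le _⟩
  · obtain ⟨c, hc, rfl⟩ := exists_mem_otherChords hl he
    exact ⟨(0, c), List.mem_map_of_mem hc, rfl⟩

end ChordSearch

section OrderThirteen

variable {es : List (Fin 13 × Fin 13)} {G : SimpleGraph (Fin 13)} {l : Fin 13}

theorem chordSearch_two : chordSearch (2 : Fin 13) 4 = [] := by decide +kernel

theorem chordSearch_three : chordSearch (3 : Fin 13) 4 = [] := by decide +kernel

theorem chordSearch_four : chordSearch (4 : Fin 13) 4 = [] := by decide +kernel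

theorem chordSearch_five : chordSearch (5 : Fin 13) 4 =
    [[(7, 4), (2, 0), (3, 1)], [(7, 4), (3, 1), (4, 2)],
      [(11, 1), (3, 1), (4, 2)], [(11, 1), (4, 2), (5, 3)]] := by
  decide +kernel

theorem chordSearch_six : chordSearch (6 : Fin 13) 4 = [] := by decide +kernel

/-- The cycle `0, 1, …, 12` together with the chord `05` and the chords in `es`. -/
def chordGraph (es : List (Fin 13 × Fin 13)) : SimpleGraph (Fin 13) :=
  addEdges ⊥ (rimWithChords 5 es)

instance : DecidableRel (chordGraph es).Adj :=
  inferInstanceAs (DecidableRel (addEdges ⊥ (rimWithChords 5 es)).Adj)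

/-- The chords that make the cycle `0, 1, …, 12` with the chord `05` into one of the two
2-pancyclic graphs. -/
def pancyclicChords : Fin 2 → List (Fin 13 × Fin 13) :=
  ![[(7, 4), (2, 0), (3, 1)], [(7, 4), (3, 1), (4, 2)]]

theorem areNewEdges_pancyclicChords (i : Fin 2) :
    AreNewEdges ⊥ (rimWithChords 5 (pancyclicChords i)) := by
  unfold AreNewEdges
  decide +kernel +revert

theorem isRPancyclic_chordGraph (i : Fin 2) : IsRPancyclic (chordGraph (pancyclicChords i)) 2 := by
  refine isRPancyclic_addEdges (x := 32) (by simp) (areNewEdges_pancyclicChords i) (by simp) ?_ ?_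
  all_goals decide +kernel +revert

theorem ncard_edgeSet_chordGraph (i : Fin 2) :
    (chordGraph (pancyclicChords i)).edgeSet.ncard = 17 := by
  rw [chordGraph, ncard_edgeSet_addEdges (areNewEdges_pancyclicChords i), edgeSet_bot,
    Set.ncard_empty]
  decide +revert

-- Only in the first graph the vertex of degree four has a neighbour of degree two.
theorem isEmpty_iso_chordGraph :
    IsEmpty (chordGraph (pancyclicChords 0) ≃g chordGraph (pancyclicChords 1)) := by
  refine ⟨fun e ↦ ?_⟩
  have hleft : (chordGraph (pancyclicChords 0)).Adj 0 12 ∧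
      (chordGraph (pancyclicChords 0)).degree 0 = 4 ∧
      (chordGraph (pancyclicChords 0)).degree 12 = 2 := by
    decide +kernel
  have hright : ¬∃ u v, (chordGraph (pancyclicChords 1)).Adj u v ∧
      (chordGraph (pancyclicChords 1)).degree u = 4 ∧
      (chordGraph (pancyclicChords 1)).degree v = 2 := by
    decide +kernel
  refine hright ⟨e 0, e 12, e.map_rel_iff.2 hleft.1, ?_⟩
  rw [e.degree_eq, e.degree_eq]
  exact hleft.2

theorem pairwise_isEmpty_iso (i j : Fin 2) (hij : i ≠ j) :
    IsEmpty (chordGraph (pancyclicChords i) ≃g chordGraph (pancyclicChords j)) := by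
  have h := isEmpty_iso_chordGraph
  fin_cases i <;> fin_cases j
  exacts [absurd rfl hij, h, ⟨fun e ↦ h.false e.symm⟩, absurd rfl hij]

-- The reflection exchanging the ends of the chord `05` pairs up the four graphs found.
theorem exists_iso_chordGraph_of_mem (h : es ∈ chordSearch 5 4) :
    ∃ i, Nonempty (chordGraph es ≃g chordGraph (pancyclicChords i)) := by
  simp only [chordSearch_five, List.mem_cons, List.not_mem_nil, or_false] at h
  rcases h with rfl | rfl | rfl | rfl
  · exact ⟨0, ⟨.refl⟩⟩
  · exact ⟨1, ⟨.refl⟩⟩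
  · exact ⟨1, ⟨Equiv.subLeft 5, by decide +kernel⟩⟩
  · exact ⟨0, ⟨Equiv.subLeft 5, by decide +kernel⟩⟩

theorem exists_iso_chordGraph_of_isNormalized (hG : IsRPancyclic G 2)
    (hcard : G.edgeSet.ncard ≤ 18) (hl : IsNormalized G l) :
    ∃ i, Nonempty (G ≃g chordGraph (pancyclicChords i)) := by
  obtain ⟨es, hes, rfl⟩ := exists_mem_chordSearch hG hl (d := 4) hcard
  obtain rfl | rfl | rfl | rfl | rfl : l = 2 ∨ l = 3 ∨ l = 4 ∨ l = 5 ∨ l = 6 := by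
    have := hl.two_le
    have := hl.two_mul_le
    omega
  · simp [chordSearch_two] at hes
  · simp [chordSearch_three] at hes
  · simp [chordSearch_four] at hes
  · exact exists_iso_chordGraph_of_mem hes
  · simp [chordSearch_six] at hes

theorem not_isRPancyclic_cycleGraph : ¬IsRPancyclic (cycleGraph 13) 2 := by
  intro h
  have hvalue := evalDigits_cycleDigit_eq_target h
  rw [← addEdges_rim, ← chordsValue_eq areNewEdges_rim] at hvalue
  exact absurd hvalue (by decide +kernel)

end OrderThirteen

end PancyclicCount

theorem two_pancyclic_count_order_13 : ExactlyNUpToIso 2 2 13 18 := by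
  open PancyclicCount in
  refine ⟨fun i ↦ chordGraph (pancyclicChords i), pairwise_isEmpty_iso,
    fun i ↦ ⟨isRPancyclic_chordGraph i, (ncard_edgeSet_chordGraph i).trans_le (by decide)⟩,
    fun W _ G hW hcard hG ↦ ?_⟩
  obtain ⟨G₁, hle, ⟨e₁⟩⟩ := exists_cycleGraph_le_iso hW two_ne_zero hG
  have hne : cycleGraph 13 ≠ G₁ := by
    rintro rfl
    exact not_isRPancyclic_cycleGraph ((isRPancyclic_congr e₁).1 hG)
  obtain ⟨G₂, l, ⟨e₂⟩, hl⟩ := exists_isNormalized (hle.lt_of_ne hne)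
  have e := e₁.trans e₂
  obtain ⟨i, ⟨e'⟩⟩ := exists_iso_chordGraph_of_isNormalized ((isRPancyclic_congr e).1 hG)
    ((ncard_edgeSet_congr e).symm.trans_le hcard) hl
  exact ⟨i, ⟨e.trans e'⟩⟩
end

section
/- There are, up to isomorphism, exactly three (2)-pancyclic graphs on 19 vertices with at most 24 edges. -/
open SimpleGraph

/-!
Let `T` be 2-pancyclic with 19 vertices and at most 24 edges. One of its two Hamiltonian cycles can
be taken to be `0, 1, …, 18`; let `E` be the other one. Both have degree two everywhere, so their
symmetric difference decomposes into closed trails alternating between chords (edges of `E`) and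
edges of the first cycle. At most five edges of `T` lie outside the first cycle, too few to contain
all translates of a longest chord of `E`; so one may rotate `T` until `{0, a}` is a longest chord,
`2 ≤ a ≤ 9`, and `{a - 1, 18}` is not an edge of `E`. This leaves eight searches.

Adding an edge `xy` creates one cycle for every path from `x` to `y`. The cycle counts can therefore
be updated edge by edge and never decrease, so a branch of the search dies as soon as one of them
exceeds two. They are stored as the base-16 digits of one number, which makes it possible to
evaluate the search in the kernel. Every leaf that survives is a rotation or reflection of one of
three graphs, which have different numbers of vertices of degree four.
-/

namespace TwoPancyclic

section Cycles

variable {V W : Type*}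

/-- The cycles of length `k` in `G`, as graphs on the whole vertex type: unlike subgraphs of `G`,
these can be compared for different `G`. For `k ≥ 2` they correspond to the subgraphs that
`cycleCount` counts. -/
def cycles (G : SimpleGraph V) (k : ℕ) : Set (SimpleGraph V) :=
  {C | C ≤ G ∧ ∃ p : Fin k ↪ V, C = (cycleGraph k).map p}

lemma cycleGraph_adj_add_one {n : ℕ} (i : Fin (n + 2)) : (cycleGraph (n + 2)).Adj i (i + 1) := by
  rw [cycleGraph_adj]
  right
  abel

lemma mem_verts_iff_exists_adj {G : SimpleGraph V} {n : ℕ} {H : G.Subgraph}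
    (e : H.coe ≃g cycleGraph (n + 2)) (v : V) : v ∈ H.verts ↔ ∃ w, H.Adj v w := by
  refine ⟨fun hv => ?_, fun ⟨w, hw⟩ => hw.fst_mem⟩
  have h := e.symm.map_adj_iff.mpr (cycleGraph_adj_add_one (e ⟨v, hv⟩))
  rw [e.symm_apply_apply] at h
  exact ⟨_, h⟩

lemma spanningCoe_mem_cycles {G : SimpleGraph V} {k : ℕ} {H : G.Subgraph}
    (e : H.coe ≃g cycleGraph k) : H.spanningCoe ∈ cycles G k := by
  refine ⟨H.spanningCoe_le, ⟨fun i => e.symm i, fun i j h => e.symm.injective (Subtype.ext h)⟩, ?_⟩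
  ext a b
  simp only [Subgraph.spanningCoe_adj, SimpleGraph.map_adj]
  constructor
  · intro h
    exact ⟨e ⟨a, h.fst_mem⟩, e ⟨b, h.snd_mem⟩, e.map_adj_iff.mpr h,
      congrArg Subtype.val (e.symm_apply_apply _), congrArg Subtype.val (e.symm_apply_apply _)⟩
  · rintro ⟨u, v, h, rfl, rfl⟩
    exact e.symm.map_adj_iff.mpr h

lemma exists_spanningCoe_eq_of_mem_cycles {G C : SimpleGraph V} {k : ℕ} (hC : C ∈ cycles G k) :
    ∃ H : G.Subgraph, Nonempty (H.coe ≃g cycleGraph k) ∧ H.spanningCoe = C := by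
  obtain ⟨hle, p, rfl⟩ := hC
  refine ⟨⟨Set.range p, ((cycleGraph k).map p).Adj, fun h => hle h, ?_, ⟨fun v w h => h.symm⟩⟩,
    ⟨RelIso.symm ⟨Equiv.ofInjective p p.injective, ?_⟩⟩, ?_⟩
  · rintro v w ⟨_, a, b, _, rfl, rfl⟩
    exact ⟨a, rfl⟩
  · simp
  · ext a b
    simp

lemma cycleCount_eq_ncard_cycles (G : SimpleGraph V) (n : ℕ) :
    cycleCount G (n + 2) = (cycles G (n + 2)).ncard := by
  have image_eq : (fun H : G.Subgraph => H.spanningCoe) ''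
      {H : G.Subgraph | Nonempty (H.coe ≃g cycleGraph (n + 2))} = cycles G (n + 2) := by
    ext C
    constructor
    · rintro ⟨H, ⟨e⟩, rfl⟩
      exact spanningCoe_mem_cycles e
    · intro hC
      exact exists_spanningCoe_eq_of_mem_cycles hC
  rw [cycleCount, ← image_eq, Set.InjOn.ncard_image]
  rintro H ⟨e⟩ K ⟨f⟩ h
  have adj_iff (a b) : H.Adj a b ↔ K.Adj a b := by
    simpa using congrArg (fun X : SimpleGraph V => X.Adj a b) h
  ext a b
  · simp only [mem_verts_iff_exists_adj e, mem_verts_iff_exists_adj f, adj_iff]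
  · exact adj_iff a b

lemma cycles_mono {G G' : SimpleGraph V} (h : G ≤ G') (k : ℕ) : cycles G k ⊆ cycles G' k :=
  fun _ hC => ⟨hC.1.trans h, hC.2⟩

lemma map_mem_cycles {G : SimpleGraph V} {G' : SimpleGraph W} (f : G →g G')
    (hf : Function.Injective f) {k : ℕ} {C : SimpleGraph V} (hC : C ∈ cycles G k) :
    C.map f ∈ cycles G' k := by
  obtain ⟨hle, p, rfl⟩ := hC
  refine ⟨?_, p.trans ⟨f, hf⟩, by rw [SimpleGraph.map_map]; rfl⟩
  rintro a b ⟨_, u, v, h, rfl, rfl⟩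
  exact f.map_adj (hle h)

lemma cycleCount_le_of_injective [Finite W] {G : SimpleGraph V}
    {G' : SimpleGraph W} (f : G →g G') (hf : Function.Injective f) (n : ℕ) :
    cycleCount G (n + 2) ≤ cycleCount G' (n + 2) := by
  rw [cycleCount_eq_ncard_cycles, cycleCount_eq_ncard_cycles]
  exact Set.ncard_le_ncard_of_injOn (fun C => C.map f) (fun C hC => map_mem_cycles f hf hC)
    (fun _ _ _ _ h => SimpleGraph.map_injective ⟨f, hf⟩ h)

lemma cycleCount_mono [Finite V] {G G' : SimpleGraph V} (h : G ≤ G') (n : ℕ) :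
    cycleCount G (n + 2) ≤ cycleCount G' (n + 2) :=
  cycleCount_le_of_injective (Hom.ofLE h) Function.injective_id n

lemma cycleCount_congr [Finite V] [Finite W] {G : SimpleGraph V}
    {G' : SimpleGraph W} (e : G ≃g G') (n : ℕ) :
    cycleCount G (n + 2) = cycleCount G' (n + 2) :=
  le_antisymm (cycleCount_le_of_injective e.toHom e.injective n)
    (cycleCount_le_of_injective e.symm.toHom e.symm.injective n)

lemma isRPancyclic_of_iso [Fintype V] [Fintype W] {G : SimpleGraph V} {G' : SimpleGraph W}
    {r : ℕ} (h : IsRPancyclic G r) (e : G ≃g G') : IsRPancyclic G' r := by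
  have card_eq : Fintype.card V = Fintype.card W := Fintype.card_congr e.toEquiv
  refine ⟨card_eq ▸ h.1, fun k hk hk' => ?_⟩
  obtain ⟨n, rfl⟩ := Nat.exists_eq_add_of_le' (show 2 ≤ k by lia)
  rw [← cycleCount_congr e, h.2 _ hk (card_eq ▸ hk')]

lemma cycleCount_le_card_pow [Fintype V] (G : SimpleGraph V) (n : ℕ) :
    cycleCount G (n + 2) ≤ Fintype.card V ^ (n + 2) := by
  have cycles_subset : cycles G (n + 2) ⊆
      (fun p : Fin (n + 2) ↪ V => (cycleGraph (n + 2)).map p) '' Set.univ := by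
    rintro C ⟨_, p, rfl⟩
    exact ⟨p, trivial, rfl⟩
  calc cycleCount G (n + 2) = (cycles G (n + 2)).ncard := cycleCount_eq_ncard_cycles G n
    _ ≤ _ := Set.ncard_le_ncard cycles_subset (Set.toFinite _)
    _ ≤ (Set.univ : Set (Fin (n + 2) ↪ V)).ncard := Set.ncard_image_le
    _ = (Fintype.card V).descFactorial (n + 2) := by
      rw [Set.ncard_univ, Nat.card_eq_fintype_card, Fintype.card_embedding_eq, Fintype.card_fin]
    _ ≤ _ := Nat.descFactorial_le_pow _ _

end Cycles

section Paths

open Finset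

variable {V : Type*} [Fintype V] [DecidableEq V] {G G' : SimpleGraph V} {s : Finset V} {u x y : V}
  {l n : ℕ}

open Classical in
/-- The paths with `l` edges from `u` to `y` in `G` whose vertices after the first one lie
in `s`, as vertex sequences. -/
noncomputable def pathsIn (G : SimpleGraph V) (l : ℕ) (s : Finset V) (u y : V) :
    Finset (Fin (l + 1) → V) :=
  {p | Function.Injective p ∧ p 0 = u ∧ p (Fin.last l) = y ∧
    ∀ i : Fin l, G.Adj (p i.castSucc) (p i.succ) ∧ p i.succ ∈ s}

lemma mem_pathsIn {p : Fin (l + 1) → V} : p ∈ pathsIn G l s u y ↔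
    Function.Injective p ∧ p 0 = u ∧ p (Fin.last l) = y ∧
      ∀ i : Fin l, G.Adj (p i.castSucc) (p i.succ) ∧ p i.succ ∈ s := by
  simp [pathsIn]

/-- The number of paths with `l` edges from `x` to `y` in `G`. -/
noncomputable def pathCount (G : SimpleGraph V) (l : ℕ) (x y : V) : ℕ :=
  #(pathsIn G l (univ.erase x) x y)

lemma pathCount_mono (h : G ≤ G') (l : ℕ) (x y : V) : pathCount G l x y ≤ pathCount G' l x y := by
  refine card_le_card fun p hp => ?_
  rw [mem_pathsIn] at hp ⊢
  exact ⟨hp.1, hp.2.1, hp.2.2.1, fun i => ⟨h (hp.2.2.2 i).1, (hp.2.2.2 i).2⟩⟩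

lemma card_pathsIn_zero (G : SimpleGraph V) (s : Finset V) (u y : V) :
    #(pathsIn G 0 s u y) = if u = y then 1 else 0 := by
  split_ifs with h
  · rw [card_eq_one]
    refine ⟨fun _ => u, Finset.ext fun p => ?_⟩
    rw [mem_pathsIn, mem_singleton]
    constructor
    · rintro ⟨_, h0, _⟩
      funext i
      rw [Fin.fin_one_eq_zero i, h0]
    · rintro rfl
      exact ⟨fun _ _ _ => Subsingleton.elim (α := Fin 1) _ _, rfl, h, fun i => i.elim0⟩
  · rw [card_eq_zero, eq_empty_iff_forall_notMem]
    intro p hp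
    obtain ⟨_, h0, h1, _⟩ := mem_pathsIn.1 hp
    exact h (h0.symm.trans h1)

lemma cons_mem_pathsIn_succ (hu : u ∉ s) {q : Fin (l + 1) → V} :
    (Fin.cons u q : Fin (l + 2) → V) ∈ pathsIn G (l + 1) s u y ↔
      q 0 ∈ s ∧ G.Adj u (q 0) ∧ q ∈ pathsIn G l (s.erase (q 0)) (q 0) y := by
  rw [mem_pathsIn, mem_pathsIn, Fin.cons_injective_iff, ← Fin.succ_last, Fin.forall_fin_succ]
  simp only [Fin.cons_zero, Fin.cons_succ, Fin.castSucc_zero, ← Fin.succ_castSucc, mem_erase,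
    true_and]
  constructor
  · rintro ⟨⟨_, hinj⟩, hl, ⟨hadj, h0⟩, hs⟩
    exact ⟨h0, hadj, hinj, hl, fun i =>
      ⟨(hs i).1, fun h => Fin.succ_ne_zero i (hinj h), (hs i).2⟩⟩
  · rintro ⟨h0, hadj, hinj, hl, hs⟩
    refine ⟨⟨?_, hinj⟩, hl, ⟨hadj, h0⟩, fun i => ⟨(hs i).1, (hs i).2.2⟩⟩
    rintro ⟨i, rfl⟩
    induction i using Fin.cases with
    | zero => exact hu h0
    | succ j => exact hu (hs j).2.2

open Classical in
lemma card_pathsIn_succ (G : SimpleGraph V) (l : ℕ) (hu : u ∉ s) (y : V) :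
    #(pathsIn G (l + 1) s u y) = ∑ w ∈ s with G.Adj u w, #(pathsIn G l (s.erase w) w y) := by
  have eq_biUnion : pathsIn G (l + 1) s u y = {w ∈ s | G.Adj u w}.biUnion fun w =>
      (pathsIn G l (s.erase w) w y).image (Fin.cons (α := fun _ => V) u) := by
    ext p
    simp only [mem_biUnion, mem_filter, mem_image]
    constructor
    · intro hp
      have hcons : Fin.cons u (Fin.tail p) = p := by
        rw [← (mem_pathsIn.1 hp).2.1]
        exact Fin.cons_self_tail p
      rw [← hcons, cons_mem_pathsIn_succ hu] at hp
      exact ⟨_, ⟨hp.1, hp.2.1⟩, _, hp.2.2, hcons⟩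
    · rintro ⟨w, ⟨hw, hadj⟩, q, hq, rfl⟩
      obtain rfl : q 0 = w := (mem_pathsIn.1 hq).2.1
      exact (cons_mem_pathsIn_succ hu).2 ⟨hw, hadj, hq⟩
  rw [eq_biUnion, card_biUnion]
  · exact sum_congr rfl fun w _ =>
      card_image_of_injective _ (Fin.cons_right_injective (α := fun _ => V) u)
  · intro v _ w _ hvw
    rw [Function.onFun, Finset.disjoint_left]
    intro _ hv hw
    obtain ⟨p, hp, rfl⟩ := mem_image.1 hv
    obtain ⟨q, hq, heq⟩ := mem_image.1 hw
    obtain rfl := Fin.cons_right_injective (α := fun _ => V) u heq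
    exact hvw ((mem_pathsIn.1 hp).2.1.symm.trans (mem_pathsIn.1 hq).2.1)

end Paths

section AddEdge

variable {V : Type*} {G : SimpleGraph V} {x y : V} {n : ℕ}

/-- Translation by `i`, as an automorphism of a cycle graph. -/
def cycleRotation (i : Fin (n + 2)) : cycleGraph (n + 2) ≃g cycleGraph (n + 2) where
  toEquiv := Equiv.addLeft i
  map_rel_iff' := by
    intro a b
    simp only [cycleGraph_adj, Equiv.coe_addLeft, add_sub_add_left_eq_sub]

/-- The reflection `x ↦ i - x`, as an automorphism of a cycle graph. -/
def cycleReflection (i : Fin (n + 2)) : cycleGraph (n + 2) ≃g cycleGraph (n + 2) where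
  toEquiv := Equiv.subLeft i
  map_rel_iff' := by
    intro a b
    simp only [cycleGraph_adj, Equiv.subLeft_apply, sub_sub_sub_cancel_left]
    exact or_comm

lemma map_comp_iso {W : Type*} {H : SimpleGraph W} (p : W → V) (e : H ≃g H) :
    H.map (p ∘ e) = H.map p := by
  have map_eq : H.map e = H := (map_symm H e.symm.toEquiv).trans e.symm.toEmbedding.comap_eq
  rw [← SimpleGraph.map_map, map_eq]

lemma fin_last_eq_neg_one (n : ℕ) : Fin.last (n + 1) = -1 :=
  eq_neg_of_add_eq_zero_left (Fin.last_add_one _)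

lemma exists_map_cycleGraph_eq_of_adj {p : Fin (n + 2) → V} (hp : Function.Injective p)
    (h : ((cycleGraph (n + 2)).map p).Adj x y) :
    ∃ q : Fin (n + 2) → V, Function.Injective q ∧
      (cycleGraph (n + 2)).map q = (cycleGraph (n + 2)).map p ∧ q 0 = x ∧ q (Fin.last _) = y := by
  obtain ⟨_, i, j, hij, rfl, rfl⟩ := h
  rw [cycleGraph_adj] at hij
  rcases hij with hij | hij
  · refine ⟨p ∘ cycleRotation i, hp.comp (cycleRotation i).injective, map_comp_iso _ _, ?_, ?_⟩
    · exact congrArg p (add_zero i)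
    · refine congrArg p (show i + Fin.last _ = j from ?_)
      rw [fin_last_eq_neg_one, ← hij]
      abel
  · refine ⟨p ∘ cycleReflection i, hp.comp (cycleReflection i).injective, map_comp_iso _ _, ?_, ?_⟩
    · exact congrArg p (sub_zero i)
    · refine congrArg p (show i - Fin.last _ = j from ?_)
      rw [fin_last_eq_neg_one, ← hij]
      abel

/- Two traversals that agree at `i - 1` and `i` agree at `i + 1`, because `p i` has only two
neighbours on the cycle. -/
lemma eq_of_map_cycleGraph_eq {p q : Fin (n + 3) → V} (hp : Function.Injective p)
    (hq : Function.Injective q) (h : (cycleGraph (n + 3)).map p = (cycleGraph (n + 3)).map q)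
    (h_zero : p 0 = q 0) (h_last : p (Fin.last _) = q (Fin.last _)) : p = q := by
  have agree_add_one (i : Fin (n + 3)) (hi : p i = q i) (hi' : p (i - 1) = q (i - 1)) :
      p (i + 1) = q (i + 1) := by
    have hadj : ((cycleGraph (n + 3)).map p).Adj (p i) (p (i + 1)) :=
      ⟨fun h => (cycleGraph_adj_add_one i).ne (hp h), i, i + 1, cycleGraph_adj_add_one i, rfl, rfl⟩
    rw [h, hi] at hadj
    obtain ⟨_, u, v, huv, hu, hv⟩ := hadj
    obtain rfl := hq hu
    rw [← hv]
    rcases cycleGraph_adj.1 huv with huv | huv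
    · obtain rfl : u - 1 = v := by rw [← huv, sub_sub_cancel]
      rw [← hi'] at hv
      have two_eq_zero : (1 : Fin (n + 3)) + 1 = 0 := by
        rw [← sub_eq_zero.2 (hp hv).symm]
        abel
      simp only [Fin.ext_iff, Fin.val_add, Fin.val_one, Fin.val_zero] at two_eq_zero
      rw [Nat.mod_eq_of_lt (by lia)] at two_eq_zero
      lia
    · rw [← huv, add_sub_cancel]
  have agree (i : Fin (n + 3)) : p i = q i ∧ p (i - 1) = q (i - 1) := by
    induction i using Fin.induction with
    | zero => rw [zero_sub, ← fin_last_eq_neg_one]; exact ⟨h_zero, h_last⟩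
    | succ i ih =>
      rw [← Fin.coeSucc_eq_succ, add_sub_cancel_right]
      exact ⟨agree_add_one _ ih.1 ih.2, ih.1⟩
  exact funext fun i => (agree i).1

lemma map_cycleGraph_le {p : Fin (n + 2) → V} (h : ∀ i, G.Adj (p i) (p (i + 1))) :
    (cycleGraph (n + 2)).map p ≤ G := by
  rintro _ _ ⟨_, u, v, huv, rfl, rfl⟩
  rcases cycleGraph_adj.1 huv with huv | huv
  · obtain rfl := eq_add_of_sub_eq' huv
    exact (h v).symm
  · obtain rfl := eq_add_of_sub_eq' huv
    exact h u

lemma cycles_sup_edge (hG : ¬G.Adj x y) (k : ℕ) :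
    cycles (G ⊔ edge x y) k = cycles G k ∪ {C ∈ cycles (G ⊔ edge x y) k | C.Adj x y} := by
  ext C
  constructor
  · intro hC
    by_cases h : C.Adj x y
    · exact Or.inr ⟨hC, h⟩
    · refine Or.inl ⟨fun a b hab => (hC.1 hab).resolve_right fun h' => ?_, hC.2⟩
      rcases ((edge_adj ..).1 h').1 with ⟨rfl, rfl⟩ | ⟨rfl, rfl⟩
      exacts [h hab, h hab.symm]
  · rintro (hC | hC)
    exacts [cycles_mono le_sup_left _ hC, hC.1]

variable [Fintype V] [DecidableEq V]

lemma map_mem_cycles_of_mem_pathsIn (hxy : x ≠ y) {p : Fin (n + 3) → V} {s : Finset V}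
    (hp : p ∈ pathsIn G (n + 2) s x y) :
    (cycleGraph (n + 3)).map p ∈ {C ∈ cycles (G ⊔ edge x y) (n + 3) | C.Adj x y} := by
  obtain ⟨hinj, rfl, rfl, hs⟩ := mem_pathsIn.1 hp
  refine ⟨⟨map_cycleGraph_le fun i => ?_, ⟨p, hinj⟩, rfl⟩, hxy, 0, Fin.last _, ?_, rfl, rfl⟩
  · induction i using Fin.lastCases with
    | last => rw [Fin.last_add_one]; exact Or.inr ((edge_adj ..).2 ⟨Or.inr ⟨rfl, rfl⟩, hxy.symm⟩)
    | cast j => rw [Fin.coeSucc_eq_succ]; exact Or.inl (hs j).1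
  · rw [cycleGraph_adj, fin_last_eq_neg_one]
    left
    abel

lemma mem_pathsIn_of_map_le {p : Fin (n + 3) → V} (hp : Function.Injective p)
    (hle : (cycleGraph (n + 3)).map p ≤ G ⊔ edge (p 0) (p (Fin.last _))) :
    p ∈ pathsIn G (n + 2) (Finset.univ.erase (p 0)) (p 0) (p (Fin.last _)) := by
  refine mem_pathsIn.2 ⟨hp, rfl, rfl, fun i => ⟨?_, ?_⟩⟩
  · have hadj := cycleGraph_adj_add_one i.castSucc
    rw [Fin.coeSucc_eq_succ] at hadj
    refine (hle ⟨fun h => hadj.ne (hp h), _, _, hadj, rfl, rfl⟩).resolve_right fun h => ?_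
    rcases ((edge_adj ..).1 h).1 with ⟨h0, h1⟩ | ⟨h0, -⟩
    · have h0 := congrArg Fin.val (hp h0)
      have h1 := congrArg Fin.val (hp h1)
      simp only [Fin.val_castSucc, Fin.val_succ, Fin.val_zero, Fin.val_last] at h0 h1
      lia
    · exact (Fin.castSucc_lt_last i).ne (hp h0)
  · rw [Finset.mem_erase]
    exact ⟨fun h => Fin.succ_ne_zero i (hp h), Finset.mem_univ _⟩

/-- The cycles through a new edge `xy` are the paths from `x` to `y`, closed up. -/
lemma cycleCount_sup_edge (hxy : x ≠ y) (hG : ¬G.Adj x y) (n : ℕ) :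
    cycleCount (G ⊔ edge x y) (n + 3) = cycleCount G (n + 3) + pathCount G (n + 2) x y := by
  have disjoint : Disjoint (cycles G (n + 3)) {C ∈ cycles (G ⊔ edge x y) (n + 3) | C.Adj x y} :=
    Set.disjoint_left.2 fun C h h' => hG (h.1 h'.2)
  rw [cycleCount_eq_ncard_cycles _ (n + 1), cycleCount_eq_ncard_cycles _ (n + 1),
    cycles_sup_edge hG, Set.ncard_union_eq disjoint (Set.toFinite _) (Set.toFinite _), pathCount,
    ← Set.ncard_coe_finset]
  congr 1
  refine (Set.ncard_congr (fun p _ => (cycleGraph (n + 3)).map p) ?_ ?_ ?_).symm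
  · intro p hp
    exact map_mem_cycles_of_mem_pathsIn hxy hp
  · intro p q hp hq h
    obtain ⟨hp, hp0, hpl, -⟩ := mem_pathsIn.1 (Finset.mem_coe.1 hp)
    obtain ⟨hq, hq0, hql, -⟩ := mem_pathsIn.1 (Finset.mem_coe.1 hq)
    exact eq_of_map_cycleGraph_eq hp hq h (hp0.trans hq0.symm) (hpl.trans hql.symm)
  · rintro _ ⟨⟨hle, p, rfl⟩, hadj⟩
    obtain ⟨q, hq, hqp, rfl, rfl⟩ := exists_map_cycleGraph_eq_of_adj p.injective hadj
    exact ⟨q, mem_pathsIn_of_map_le hq (hqp ▸ hle), hqp⟩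

end AddEdge

section Search

/-- Call-by-value application: the kernel reduces `x` to a numeral before substituting it. -/
def force.{u} {α : Sort u} (x : ℕ) (k : ℕ → α) : α :=
  Nat.rec (motive := fun _ => α) (k x) (fun y _ => k y) (Nat.add x (nat_lit 1))

/- Most of the kernel time goes into `foldBits`, `sumBits`, `allBits` and `pathSums`, so these are
written with recursors and without instances. -/

/-- Right fold over the `n` lowest powers of two occurring in a number. A number below `2 ^ 19`
stands for a set of vertices, a power of two for a single vertex. -/
def foldBits {α : Type} (step : ℕ → α → α) (z : α) (n : ℕ) : ℕ → α :=
  Nat.rec (motive := fun _ => ℕ → α) (fun _ => z)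
    (fun _ ih m => Nat.rec (motive := fun _ => α) z
      (fun k _ => step (Nat.xor (Nat.succ k) (Nat.land (Nat.succ k) k))
        (ih (Nat.land (Nat.succ k) k))) m) n

/-- The sum of `f w` over the vertices `w` in a set. -/
def sumBits (f : ℕ → ℕ) : ℕ → ℕ :=
  foldBits (fun w r => Nat.add (f w) r) (nat_lit 0) (nat_lit 19)

/-- Whether `p w` holds for all vertices `w` in a set. -/
def allBits (p : ℕ → Bool) : ℕ → Bool :=
  foldBits (fun w r => and (force w p) r) true (nat_lit 19)

/-- Depth-first enumeration of paths with at most `d` edges in the graph with adjacency matrix `A`: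
`front` holds the possible next vertices and `avail` the unvisited ones. A path with `n + 1` edges
ending at vertex `y` contributes `B ^ n * 2 ^ (S * y)`. -/
def pathSums (S B A d : ℕ) : ℕ → ℕ → ℕ :=
  Nat.rec (motive := fun _ => ℕ → ℕ → ℕ) (fun _ _ => nat_lit 0)
    (fun _ ih avail front => sumBits (fun w => force (Nat.xor avail w) fun avail' =>
      Nat.add (Nat.pow w S)
        (Nat.mul B (ih avail' (Nat.land (Nat.div A (Nat.pow w S)) avail')))) front) d

/-- The set of all vertices. -/
def full : ℕ := 2 ^ 19 - 1

/-- The value of `pathSums` for paths of at most `d` edges starting at `u`, with all other vertices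
unvisited. -/
def pathSumsFrom (S B d A u : ℕ) : ℕ :=
  force (full ^^^ u) fun avail => pathSums S B A d avail (A / u ^ S &&& avail)

/-- The entry for endpoint `w` in a number `D` computed by `pathSumsFrom`. -/
def entry (S D w : ℕ) : ℕ := D / w ^ S % 2 ^ S

/-- The contribution of the edge `uw` to an adjacency matrix. The kernel hashes a numeral by its
low 64 bits; the last term puts a tag into otherwise unused ones, so that the matrices met in the
search do not all collide. -/
def edgeCode (S u w : ℕ) : ℕ := u ^ S * w ^^^ w ^ S * u ^^^ (u + w) ^ 3 % 1000003 * 2 ^ 20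

/-- The adjacency matrix, with `S` bits per row, of the graph with edge list `l`. -/
def matrix (S : ℕ) : List (Fin 19 × Fin 19) → ℕ
  | [] => 0
  | e :: l => matrix S l ^^^ edgeCode S (2 ^ e.1.val) (2 ^ e.2.val)

/-- The cycle counts of the graph with edge list `l`, as the number with base-`B` digits
`0, #C₃, #C₄, …`. -/
def cycleDigits (S B : ℕ) : List (Fin 19 × Fin 19) → ℕ
  | [] => 0
  | e :: l => cycleDigits S B l +
      entry S (pathSumsFrom S B 18 (matrix S l) (2 ^ e.1.val)) (2 ^ e.2.val)

/-- The edges of the cycle `0, 1, …, 18`. -/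
def cycleEdges : List (Fin 19 × Fin 19) :=
  (0, 18) :: (List.finRange 18).map fun i => (i.castSucc, i.succ)

/-- The three graphs of the theorem. -/
def solution : Fin 3 → List (Fin 19 × Fin 19) :=
  ![[(0, 4), (0, 8), (1, 5), (7, 9), (7, 10)] ++ cycleEdges,
    [(0, 4), (1, 5), (5, 7), (5, 8), (6, 17)] ++ cycleEdges,
    [(0, 4), (1, 5), (6, 8), (6, 9), (7, 18)] ++ cycleEdges]

/-- Whether `A` is the adjacency matrix of a dihedral image of one of the solutions. -/
def listed (A : ℕ) : Bool :=
  (List.finRange 3).any fun i => (List.finRange 19).any fun r =>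
    A == matrix 152 ((solution i).map (Prod.map (r + ·) (r + ·))) ||
      A == matrix 152 ((solution i).map (Prod.map (r - ·) (r - ·)))

/-- The base-16 cycle counts of a 2-pancyclic graph, `∑ n < 17, 2 * 16 ^ (n + 1)`. -/
def target : ℕ := 629648864382619361824

/-- Adding `5` to a base-16 digit sets its highest bit unless the digit is at most `2`; digit `0`,
which is nonzero if the edge just added was already present, has to vanish. In base 16 the two
constants are `55…57` and `88…88`, with 18 digits. -/
def good (c : ℕ) : Bool :=
  (c + 1574122160956548404567 &&& 2518595457530477447304).beq 0

/-- The possible last edges `uw` with `w` in `M` lead to solutions. The comparison of short cycles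
alone is a cheap first test. -/
def lastChord (A c u M : ℕ) : Bool :=
  allBits (fun w =>
    !((c + entry 152 (pathSumsFrom 152 16 5 A u) w) % 16 ^ 5).beq (target % 16 ^ 5) ||
    !(c + entry 152 (pathSumsFrom 152 16 18 A u) w).beq target || listed (A ^^^ edgeCode 152 u w)) M

/-- Whether `next` succeeds after the addition of any edge `uw` with `w` in `M` that keeps all cycle
counts at most `2`. -/
def nextChord (next : ℕ → ℕ → ℕ → Bool) (A c u M : ℕ) : Bool :=
  allBits (fun w => force (c + entry 152 (pathSumsFrom 152 16 18 A u) w) fun c' =>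
    !good c' || force (A ^^^ edgeCode 152 u w) fun A' => next w A' c') M

/-- The vertices `w` of a set for which the path counts `D` towards `w` keep all cycle counts at
most `2`. -/
def goodEnds (c D : ℕ) : ℕ → ℕ :=
  sumBits fun w => bif good (c + entry 152 D w) then w else 0

/-- The vertices after `u`. -/
def above (u : ℕ) : ℕ := 2 ^ 19 - u * 2

/-- Search over all sets of at most `n + 1` further edges `uw`, `u < w`, ordered by `u`, where
`u ≥ x` and `w` lies in `cand u`. -/
def extend : ℕ → ℕ → (ℕ → ℕ) → ℕ → ℕ → Bool
  | 0, x, cand, A, c =>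
    !c.beq target && allBits (fun u => lastChord A c u (cand u)) (2 ^ 19 - x)
  | n + 1, x, cand, A, c =>
    !c.beq target && allBits (fun u => nextChord
      (fun _ A' c' => extend n u
        (fun v => goodEnds c' (pathSumsFrom 152 16 18 A v) (cand v)) A' c') A c u (cand u))
      (2 ^ 19 - x)

/-- The successor of `u` on the cycle `0, 1, …, 18`. -/
def next (u : ℕ) : ℕ := u * 2 % full

/-- The predecessor of `u` on the cycle `0, 1, …, 18`. -/
def prev (u : ℕ) : ℕ := u * 2 ^ 18 % full

/-- Continuation of a trail that started at `s` and has reached `u` along an edge of the cycle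
`0, 1, …, 18`: `branch` chooses the next chord from the graph with adjacency matrix `L`. If the
trail is closed and there are two Hamiltonian cycles, `finish` adds the edges outside both. If the
trail is closed but there is only one, a new trail starts. -/
def arrive (L : ℕ) (finish : ℕ → ℕ → Bool) (branch : ℕ → ℕ → ℕ → ℕ → ℕ → ℕ → Bool)
    (R s u A c : ℕ) : Bool :=
  bif u.beq s then
    bif (c / 16 ^ 17 % 16).beq 2 then finish A c
    else allBits (fun v => branch R v A c v (L / v ^ 152 &&& above v)) full
  else branch R s A c u (L / u ^ 152 &&& full)

/-- Continuation of a trail that has reached `v` along a chord: the next edge joins `v` to one of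
its two neighbours on the cycle `0, 1, …, 18`. The `i`-th bit of `R` is set if
the edge `{i, i + 1}` has been used. -/
def leave (arrive : ℕ → ℕ → ℕ → ℕ → ℕ → Bool) (R s v A c : ℕ) : Bool :=
  force (next v) fun v₁ => force (prev v) fun v₀ =>
    (!(R &&& v).beq 0 || force (R + v) fun R' => arrive R' s v₁ A c) &&
    (!(R &&& v₀).beq 0 || force (R + v₀) fun R' => arrive R' s v₀ A c)

/-- Search for the trails that alternate between chords and edges of the cycle `0, 1, …, 18`, when
the current trail goes from `s` to `v` and at most `n + 1` edges are to be added. The last chord of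
a closed trail ends next to its first vertex. -/
def trail (L : ℕ) : ℕ → ℕ → ℕ → ℕ → ℕ → ℕ → Bool
  | 0 => leave (arrive L (extend 0 1 above)
      fun _ s A c u M => lastChord A c u (next s + prev s &&& M))
  | n + 1 => leave (arrive L (extend (n + 1) 1 above) fun R s =>
      nextChord fun w => trail L n R s w)

/-- The chords of circular length at most `a` except `{a - 1, 18}`, the translate of `{0, a}`. -/
def chords (a : Fin 19) : List (Fin 19 × Fin 19) :=
  (List.finRange 19 ×ˢ List.finRange 19).filter fun e =>
    e.1 < e.2 && 2 ≤ min (e.1 - e.2) (e.2 - e.1) && min (e.1 - e.2) (e.2 - e.1) ≤ a &&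
      e != (a - 1, 18)

/-- Search for the graphs in which the second Hamiltonian cycle contains the edge `{0, a}` and its
other chords belong to `chords a`. -/
def rootCheck (a : Fin 19) : Bool :=
  force (matrix 152 (chords a)) fun L =>
    force (matrix 152 ((0, a) :: cycleEdges)) fun A =>
      force (cycleDigits 152 16 ((0, a) :: cycleEdges)) fun c =>
        force (2 ^ a.val) fun w => trail L 3 0 1 w A c

end Search

section Bits

open Finset

lemma force_eq {α : Type*} (x : ℕ) (k : ℕ → α) : force x k = k x := by
  cases x <;> rfl

lemma exists_bitIndices_succ_eq_cons (k : ℕ) : ∃ i, (k + 1) ^^^ ((k + 1) &&& k) = 2 ^ i ∧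
    (k + 1).bitIndices = i :: ((k + 1) &&& k).bitIndices := by
  have two_mul_add_one_div_two (q : ℕ) : (2 * q + 1) / 2 = q := by lia
  obtain ⟨i, _, ⟨q, rfl⟩, hk⟩ := Nat.exists_eq_two_pow_mul_odd (k.add_one_ne_zero)
  have pred_lt : 2 ^ i - 1 < 2 ^ i := Nat.sub_lt (Nat.two_pow_pos i) one_pos
  have hk' : k = 2 ^ i * (2 * q) + (2 ^ i - 1) := by
    have := Nat.two_pow_pos i
    rw [mul_add, mul_one] at hk
    lia
  have hland : (k + 1) &&& k = 2 ^ i * (2 * q) := by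
    refine Nat.eq_of_testBit_eq fun j => ?_
    rw [hk, Nat.testBit_and, Nat.testBit_two_pow_mul, Nat.testBit_two_pow_mul, hk',
      Nat.testBit_two_pow_mul_add _ pred_lt]
    by_cases hj : j < i
    · simp [hj, not_le.2 hj]
    · rcases j - i with _ | n <;> simp [hj, not_lt.1 hj, Nat.testBit_succ, two_mul_add_one_div_two]
  refine ⟨i, ?_, ?_⟩
  · refine Nat.eq_of_testBit_eq fun j => ?_
    rw [hland, hk, Nat.testBit_xor, Nat.testBit_two_pow_mul, Nat.testBit_two_pow_mul,
      Nat.testBit_two_pow]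
    rcases lt_trichotomy j i with hj | rfl | hj
    · simp [hj.not_ge, hj.ne']
    · simp
    · obtain ⟨n, rfl⟩ := Nat.exists_eq_add_of_lt hj
      simp [add_assoc, Nat.testBit_succ, two_mul_add_one_div_two]
  · rw [hland, hk, Nat.bitIndices_two_pow_mul, Nat.bitIndices_two_pow_mul,
      Nat.bitIndices_two_mul_add_one, Nat.bitIndices_two_mul]
    simp

lemma foldBits_eq_foldr {α : Type} (step : ℕ → α → α) (z : α) {n m : ℕ}
    (h : m.bitIndices.length ≤ n) :
    foldBits step z n m = m.bitIndices.foldr (fun i => step (2 ^ i)) z := by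
  induction n generalizing m with
  | zero => rw [List.length_eq_zero_iff.1 (Nat.le_zero.1 h)]; rfl
  | succ n ih =>
    rcases m with _ | k
    · rw [Nat.bitIndices_zero]; rfl
    · obtain ⟨i, hi, hcons⟩ := exists_bitIndices_succ_eq_cons k
      rw [hcons, List.length_cons, Nat.add_le_add_iff_right] at h
      rw [hcons, List.foldr_cons, ← ih h, ← hi]
      rfl

/-- The set of vertices denoted by `m`. -/
def bits (m : ℕ) : Finset (Fin 19) := {i | m.testBit i}

lemma mem_bits {m : ℕ} {i : Fin 19} : i ∈ bits m ↔ m.testBit i := by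
  simp [bits]

lemma image_val_bits {m : ℕ} (hm : m < 2 ^ 19) :
    (bits m).image Fin.val = m.bitIndices.toFinset := by
  ext i
  rw [mem_image, List.mem_toFinset, Nat.mem_bitIndices]
  constructor
  · rintro ⟨i, hi, rfl⟩
    exact mem_bits.1 hi
  · intro hi
    have hlt : i < 19 := (Nat.pow_lt_pow_iff_right one_lt_two).1
      ((Nat.ge_two_pow_of_testBit hi).trans_lt hm)
    exact ⟨⟨i, hlt⟩, mem_bits.2 hi, rfl⟩

lemma length_bitIndices_le {m : ℕ} (hm : m < 2 ^ 19) : m.bitIndices.length ≤ 19 := by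
  rw [← List.toFinset_card_of_nodup Nat.bitIndices_nodup, ← image_val_bits hm]
  exact card_image_le.trans (card_finset_fin_le _)

lemma sumBits_eq_sum (f : ℕ → ℕ) {m : ℕ} (hm : m < 2 ^ 19) :
    sumBits f m = ∑ i ∈ bits m, f (2 ^ i.val) := by
  calc sumBits f m = (m.bitIndices.map fun i => f (2 ^ i)).sum := by
        rw [sumBits, foldBits_eq_foldr _ _ (length_bitIndices_le hm), List.sum, List.foldr_map]
        rfl
    _ = ∑ i ∈ m.bitIndices.toFinset, f (2 ^ i) := (List.sum_toFinset _ Nat.bitIndices_nodup).symm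
    _ = ∑ i ∈ bits m, f (2 ^ i.val) := by
        rw [← image_val_bits hm, sum_image Fin.val_injective.injOn]

lemma allBits_iff (p : ℕ → Bool) {m : ℕ} (hm : m < 2 ^ 19) :
    allBits p m ↔ ∀ i ∈ bits m, p (2 ^ i.val) := by
  have allBits_eq : allBits p m = m.bitIndices.all fun i => p (2 ^ i) := by
    rw [allBits, foldBits_eq_foldr _ _ (length_bitIndices_le hm)]
    simp only [force_eq]
    induction m.bitIndices with
    | nil => rfl
    | cons i l ih => rw [List.foldr_cons, ih, List.all_cons]
  rw [allBits_eq, List.all_eq_true]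
  simp only [← List.mem_toFinset, ← image_val_bits hm, forall_mem_image]

lemma bits_and (m n : ℕ) : bits (m &&& n) = bits m ∩ bits n := by
  ext i
  simp [mem_bits]

lemma bits_xor_two_pow {m : ℕ} {i : Fin 19} (hi : i ∈ bits m) :
    bits (m ^^^ 2 ^ i.val) = (bits m).erase i := by
  ext j
  rw [mem_erase, mem_bits, mem_bits, Nat.testBit_xor, Nat.testBit_two_pow]
  by_cases h : i = j
  · subst h
    simpa using mem_bits.1 hi
  · simp [Fin.val_inj, h, Ne.symm h]

lemma two_pow_val_lt (i : Fin 19) : 2 ^ i.val < 2 ^ 19 :=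
  Nat.pow_lt_pow_right one_lt_two i.isLt

lemma bits_full : bits full = univ := by
  decide

lemma bits_sub_two_pow (i : Fin 20) :
    bits (2 ^ 19 - 2 ^ i.val) = ({j | i.val ≤ j.val} : Finset (Fin 19)) := by
  decide +revert +kernel

end Bits

section Series

open Finset

variable {V : Type*} [Fintype V] [DecidableEq V] {G G' : SimpleGraph V} {s : Finset V} {u x y : V}

/-- The numbers of paths with `1, …, d` edges from `u` through `s` to `y`, as base-`B` digits. -/
noncomputable def pathSeries (B d : ℕ) (G : SimpleGraph V) (s : Finset V) (u y : V) : ℕ :=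
  ∑ n ∈ range d, B ^ n * #(pathsIn G (n + 1) s u y)

/-- The numbers of cycles of length `3, …, 19`, as base-`B` digits number `1, …, 17`. -/
noncomputable def cycleSeries (B : ℕ) (G : SimpleGraph V) : ℕ :=
  ∑ n ∈ range 17, B ^ (n + 1) * cycleCount G (n + 3)

open Classical in
lemma pathSeries_succ (B d : ℕ) (G : SimpleGraph V) (hu : u ∉ s) (y : V) :
    pathSeries B (d + 1) G s u y = ∑ w ∈ s with G.Adj u w,
      ((if w = y then 1 else 0) + B * pathSeries B d G (s.erase w) w y) := by
  simp only [pathSeries]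
  rw [sum_range_succ', sum_add_distrib, add_comm]
  simp only [card_pathsIn_succ G _ hu, card_pathsIn_zero, mul_sum, pow_zero, one_mul]
  rw [sum_comm]
  simp only [pow_succ', mul_assoc]

lemma pathSeries_le (B : ℕ) {d d' : ℕ} (h : d ≤ d') (G : SimpleGraph V) (s : Finset V) (u y : V) :
    pathSeries B d G s u y ≤ ∑ n ∈ range d', B ^ n * Fintype.card V ^ (n + 2) := by
  refine (sum_le_sum_of_subset (range_subset_range.2 h)).trans (sum_le_sum fun n _ => ?_)
  gcongr
  calc #(pathsIn G (n + 1) s u y) ≤ Fintype.card (Fin (n + 2) → V) := card_le_univ _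
    _ = Fintype.card V ^ (n + 2) := by rw [Fintype.card_fun, Fintype.card_fin]

lemma pathSeries_add_modEq (B d n : ℕ) (G : SimpleGraph V) (s : Finset V) (u y : V) :
    pathSeries B (d + n) G s u y ≡ pathSeries B d G s u y [MOD B ^ d] := by
  simp only [pathSeries, sum_range_add, pow_add, mul_assoc, ← mul_sum]
  rw [Nat.ModEq, Nat.add_mul_mod_self_left]

open Classical in
lemma pathSeries_erase (B : ℕ) (hG : ¬G.Adj x y) :
    pathSeries B 18 G (univ.erase x) x y =
      ∑ n ∈ range 17, B ^ (n + 1) * pathCount G (n + 2) x y := by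
  have no_edge : #(pathsIn G 1 (univ.erase x) x y) = 0 := by
    rw [card_pathsIn_succ G 0 (notMem_erase x univ)]
    refine sum_eq_zero fun w hw => ?_
    rw [card_pathsIn_zero, if_neg]
    rintro rfl
    exact hG (mem_filter.1 hw).2
  rw [pathSeries, sum_range_succ', no_edge, mul_zero, add_zero]
  rfl

lemma cycleSeries_sup_edge (B : ℕ) (hxy : x ≠ y) (hG : ¬G.Adj x y) :
    cycleSeries B (G ⊔ edge x y) =
      cycleSeries B G + pathSeries B 18 G (univ.erase x) x y := by
  simp only [pathSeries_erase B hG, cycleSeries, ← sum_add_distrib, ← mul_add,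
    cycleCount_sup_edge hxy hG]

lemma cycleSeries_bot {V : Type*} (B : ℕ) : cycleSeries B (⊥ : SimpleGraph V) = 0 := by
  refine sum_eq_zero fun n _ => ?_
  have no_cycles : cycles (⊥ : SimpleGraph V) (n + 3) = ∅ := by
    refine Set.eq_empty_of_forall_notMem fun C ⟨hle, p, hp⟩ => ?_
    have hadj : C.Adj (p 0) (p (0 + 1)) :=
      hp ▸ SimpleGraph.map_adj_apply.2 (cycleGraph_adj_add_one 0)
    exact hle hadj
  rw [cycleCount_eq_ncard_cycles _ (n + 1), no_cycles, Set.ncard_empty, mul_zero]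

end Series

section Digits

open Finset

lemma sum_pow_mul_div_mod {b n : ℕ} {g : Fin n → ℕ} (hg : ∀ i, g i < b) (j : Fin n) :
    (∑ i, b ^ i.val * g i) / b ^ j.val % b = g j := by
  induction n with
  | zero => exact j.elim0
  | succ n ih =>
    have hb : 0 < b := (Nat.zero_le _).trans_lt (hg 0)
    have sum_eq : ∑ i, b ^ i.val * g i = g 0 + b * ∑ i : Fin n, b ^ i.val * g i.succ := by
      simp only [Fin.sum_univ_succ, Fin.val_zero, pow_zero, one_mul, Fin.val_succ, pow_succ',
        mul_assoc, mul_sum]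
    rw [sum_eq]
    induction j using Fin.cases with
    | zero => rw [Fin.val_zero, pow_zero, Nat.div_one, Nat.add_mul_mod_self_left,
        Nat.mod_eq_of_lt (hg 0)]
    | succ j => rw [Fin.val_succ, pow_succ', ← Nat.div_div_eq_div_mul,
        Nat.add_mul_div_left _ _ hb, Nat.div_eq_of_lt (hg 0), zero_add, ih (fun i => hg i.succ)]

lemma sum_pow_succ_mul_div_mod {b n : ℕ} {g : ℕ → ℕ} (hg : ∀ i < n, g i < b) {j : ℕ}
    (hj : j < n) : (∑ i ∈ range n, b ^ (i + 1) * g i) / b ^ (j + 1) % b = g j := by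
  have hb : 0 < b := (Nat.zero_le _).trans_lt (hg j hj)
  simp only [pow_succ', mul_assoc, ← mul_sum]
  rw [Nat.mul_div_mul_left _ _ hb, sum_range]
  exact sum_pow_mul_div_mod (g := fun i : Fin n => g i) (fun i => hg i i.isLt) ⟨j, hj⟩

end Digits

section Encoding

open Finset

variable {S B A : ℕ} {G : SimpleGraph (Fin 19)} {u v w y : Fin 19}

/-- `A` is the adjacency matrix of `G`, with `S` bits per row. Its other bits are unspecified. -/
def Encodes (S A : ℕ) (G : SimpleGraph (Fin 19)) : Prop :=
  ∀ u v : Fin 19, A.testBit (S * u.val + v.val) ↔ G.Adj u v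

lemma Encodes.eq {H : SimpleGraph (Fin 19)} (hG : Encodes S A G) (hH : Encodes S A H) : G = H :=
  SimpleGraph.ext (by ext u v; rw [← hG, ← hH])

open Classical in
lemma Encodes.bits_neighbors (hA : Encodes S A G) (u : Fin 19) (m : ℕ) :
    bits (A / (2 ^ u.val) ^ S &&& m) = {w ∈ bits m | G.Adj u w} := by
  ext w
  rw [mem_filter, ← hA, mem_bits, mem_bits, ← pow_mul, Nat.testBit_and, Nat.testBit_div_two_pow,
    Bool.and_eq_true, add_comm, mul_comm u.val, and_comm]

open Classical in
lemma pathSums_eq (hA : Encodes S A G) (B d : ℕ) {m : ℕ} (hm : m < 2 ^ 19) (hu : u ∉ bits m) :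
    pathSums S B A d m (A / (2 ^ u.val) ^ S &&& m) =
      ∑ y, (2 ^ S) ^ y.val * pathSeries B d G (bits m) u y := by
  induction d generalizing m u with
  | zero => simp [pathSums, pathSeries]
  | succ d ih =>
    have step (w) (hw : w ∈ bits m) : pathSums S B A d (m ^^^ 2 ^ w.val)
        (A / (2 ^ w.val) ^ S &&& (m ^^^ 2 ^ w.val)) =
          ∑ y, (2 ^ S) ^ y.val * pathSeries B d G ((bits m).erase w) w y := by
      have hw' : w ∉ bits (m ^^^ 2 ^ w.val) := by simp [bits_xor_two_pow hw]
      rw [ih (Nat.xor_lt_two_pow hm (two_pow_val_lt w)) hw',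
        bits_xor_two_pow hw]
    calc pathSums S B A (d + 1) m (A / (2 ^ u.val) ^ S &&& m)
        = sumBits (fun w => force (m ^^^ w) fun m' => w ^ S +
            B * pathSums S B A d m' (A / w ^ S &&& m')) (A / (2 ^ u.val) ^ S &&& m) := rfl
      _ = ∑ w ∈ bits m with G.Adj u w, ((2 ^ w.val) ^ S +
            B * ∑ y, (2 ^ S) ^ y.val * pathSeries B d G ((bits m).erase w) w y) := by
        rw [sumBits_eq_sum _ (Nat.and_lt_two_pow _ hm), hA.bits_neighbors]
        exact sum_congr rfl fun w hw => by rw [force_eq, step w (mem_filter.1 hw).1]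
      _ = ∑ w ∈ bits m with G.Adj u w, ∑ y, (2 ^ S) ^ y.val *
            ((if w = y then 1 else 0) + B * pathSeries B d G ((bits m).erase w) w y) := by
        refine sum_congr rfl fun w _ => ?_
        simp only [mul_add, sum_add_distrib, mul_sum, mul_ite, mul_one, mul_zero, sum_ite_eq,
          mem_univ, if_true, pow_right_comm, mul_left_comm B]
      _ = ∑ y, (2 ^ S) ^ y.val * pathSeries B (d + 1) G (bits m) u y := by
        simp only [pathSeries_succ B d G hu, mul_sum]
        rw [sum_comm]

lemma entry_pathSumsFrom (hS : ∑ n ∈ range 18, B ^ n * 19 ^ (n + 2) < 2 ^ S) (hA : Encodes S A G)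
    {d : ℕ} (hd : d ≤ 18) (u w : Fin 19) :
    entry S (pathSumsFrom S B d A (2 ^ u.val)) (2 ^ w.val) =
      pathSeries B d G (univ.erase u) u w := by
  have hu : u ∈ bits full := bits_full ▸ mem_univ u
  have hu' : u ∉ bits (full ^^^ 2 ^ u.val) := by simp [bits_xor_two_pow hu]
  rw [pathSumsFrom, force_eq, pathSums_eq hA B d _ hu', entry, pow_right_comm,
    sum_pow_mul_div_mod (fun y => ?_), bits_xor_two_pow hu, bits_full]
  · exact (pathSeries_le B hd ..).trans_lt (by simpa using hS)
  · exact Nat.xor_lt_two_pow (Nat.sub_lt (by norm_num) one_pos) (two_pow_val_lt u)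

lemma mul_add_val_inj (hS : 19 ≤ S) (u w i j : Fin 19) :
    S * u.val + w.val = S * i.val + j.val ↔ u = i ∧ w = j := by
  have hS' : 0 < S := by lia
  constructor
  · intro h
    have hdiv := congrArg (· / S) h
    simp only [Nat.mul_add_div hS', Nat.div_eq_of_lt (w.isLt.trans_le hS),
      Nat.div_eq_of_lt (j.isLt.trans_le hS), add_zero] at hdiv
    rw [hdiv, Nat.add_left_cancel_iff] at h
    exact ⟨Fin.ext hdiv, Fin.ext h⟩
  · rintro ⟨rfl, rfl⟩
    rfl

lemma testBit_edgeCode (hS : 40 ≤ S) (u w i j : Fin 19) :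
    (edgeCode S (2 ^ u.val) (2 ^ w.val)).testBit (S * i.val + j.val) =
      (decide (u = i ∧ w = j) ^^ decide (w = i ∧ u = j)) := by
  have testBit_tag (t : ℕ) : (t % 1000003 * 2 ^ 20).testBit (S * i.val + j.val) = false := by
    rw [mul_comm, Nat.testBit_two_pow_mul, Bool.and_eq_false_iff, decide_eq_false_iff_not, not_le]
    rcases Nat.eq_zero_or_pos i.val with hi | hi
    · left
      rw [hi, mul_zero, zero_add]
      exact j.isLt.trans (by norm_num)
    · right
      refine Nat.testBit_lt_two_pow ((Nat.mod_lt t (by norm_num)).trans ?_)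
      have : S ≤ S * i.val := Nat.le_mul_of_pos_right S hi
      calc 1000003 < 2 ^ 20 := by norm_num
        _ ≤ _ := Nat.pow_le_pow_right two_pos (by omega)
  rw [edgeCode, Nat.testBit_xor, Nat.testBit_xor, testBit_tag, Bool.xor_false, ← pow_mul, ← pow_mul,
    ← pow_add, ← pow_add, mul_comm u.val, mul_comm w.val, Nat.testBit_two_pow, Nat.testBit_two_pow]
  simp only [mul_add_val_inj (show 19 ≤ S by lia)]

lemma Encodes.xor_edgeCode (hS : 40 ≤ S) (hA : Encodes S A G) (huw : u ≠ w) (hG : ¬G.Adj u w) :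
    Encodes S (A ^^^ edgeCode S (2 ^ u.val) (2 ^ w.val)) (G ⊔ edge u w) := by
  intro i j
  rw [Nat.testBit_xor, testBit_edgeCode hS, sup_adj, ← hA, edge_adj]
  by_cases h : u = i ∧ w = j
  · obtain ⟨rfl, rfl⟩ := h
    have hA' : A.testBit (S * u.val + w.val) = false := by rwa [← hA, Bool.not_eq_true] at hG
    simp [hA', huw]
  by_cases h' : w = i ∧ u = j
  · obtain ⟨rfl, rfl⟩ := h'
    have hA' : A.testBit (S * w.val + u.val) = false := by
      rwa [G.adj_comm, ← hA, Bool.not_eq_true] at hG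
    simp [hA', huw, huw.symm]
  · have h₁ : ¬(i = u ∧ j = w) := fun h₁ => h ⟨h₁.1.symm, h₁.2.symm⟩
    have h₂ : ¬(i = w ∧ j = u) := fun h₂ => h' ⟨h₂.1.symm, h₂.2.symm⟩
    simp [h, h', h₁, h₂]

end Encoding

section EdgeLists

variable {V W : Type*} {l : List (V × V)} {u v : V}

/-- The graph with edge list `l`. -/
def ofEdges : List (V × V) → SimpleGraph V
  | [] => ⊥
  | e :: l => ofEdges l ⊔ edge e.1 e.2

/-- `l` contains no loop and mentions every edge at most once. -/
def IsSimple (l : List (V × V)) : Prop :=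
  (l.map fun e => s(e.1, e.2)).Nodup ∧ ∀ e ∈ l, e.1 ≠ e.2

lemma ofEdges_adj : (ofEdges l).Adj u v ↔ s(u, v) ∈ l.map (fun e => s(e.1, e.2)) ∧ u ≠ v := by
  induction l with
  | nil => simp [ofEdges]
  | cons e l ih => rw [ofEdges, sup_adj, ih, adj_edge, List.map_cons, List.mem_cons, or_comm,
      ← or_and_right, eq_comm]

instance [DecidableEq V] : DecidableRel (ofEdges l).Adj :=
  fun _ _ => decidable_of_iff _ ofEdges_adj.symm

lemma IsSimple.not_adj {e : V × V} (h : IsSimple (e :: l)) : ¬(ofEdges l).Adj e.1 e.2 :=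
  fun hadj => (List.nodup_cons.1 h.1).1 (ofEdges_adj.1 hadj).1

lemma IsSimple.of_cons {e : V × V} (h : IsSimple (e :: l)) : IsSimple l :=
  ⟨(List.nodup_cons.1 h.1).2, fun e' he' => h.2 e' (List.mem_cons_of_mem e he')⟩

lemma isSimple_of_forall_lt [LinearOrder V] (hl : l.Nodup) (hlt : ∀ e ∈ l, e.1 < e.2) :
    IsSimple l := by
  refine ⟨hl.map_on fun e he f hf h => ?_, fun e he => (hlt e he).ne⟩
  rcases Sym2.eq_iff.1 h with ⟨h₁, h₂⟩ | ⟨h₁, h₂⟩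
  · exact Prod.ext h₁ h₂
  · exact absurd (hlt f hf) (by rw [← h₁, ← h₂]; exact (hlt e he).not_gt)

lemma map_prodMap_map_sym2 (f : V ≃ W) (l : List (V × V)) :
    (l.map (Prod.map f f)).map (fun e => s(e.1, e.2)) =
      (l.map fun e => s(e.1, e.2)).map (Sym2.map f) := by
  simp

lemma IsSimple.map (h : IsSimple l) (f : V ≃ W) : IsSimple (l.map (Prod.map f f)) := by
  refine ⟨?_, ?_⟩
  · rw [map_prodMap_map_sym2]
    exact h.1.map (Sym2.map.injective f.injective)
  · simp only [List.mem_map]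
    rintro _ ⟨e, he, rfl⟩
    exact f.injective.ne (h.2 e he)

/-- Relabelling the vertices in an edge list. -/
def ofEdgesMapIso (f : V ≃ W) (l : List (V × V)) :
    ofEdges l ≃g ofEdges (l.map (Prod.map f f)) where
  toEquiv := f
  map_rel_iff' {u v} := by
    rw [ofEdges_adj, ofEdges_adj, map_prodMap_map_sym2, ← Sym2.map_mk,
      List.mem_map_of_injective (Sym2.map.injective f.injective), f.injective.ne_iff]

lemma ncard_edgeSet_ofEdges_le (l : List (V × V)) : (ofEdges l).edgeSet.ncard ≤ l.length := by
  classical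
  have edgeSet_subset : (ofEdges l).edgeSet ⊆ (l.map fun e => s(e.1, e.2)).toFinset := by
    intro e
    induction e with | _ u v =>
    intro h
    simpa using (ofEdges_adj.1 h).1
  calc (ofEdges l).edgeSet.ncard ≤ (l.map fun e => s(e.1, e.2)).toFinset.card :=
        (Set.ncard_le_ncard edgeSet_subset).trans_eq (Set.ncard_coe_finset _)
    _ ≤ l.length := by simpa using List.toFinset_card_le (l.map fun e => s(e.1, e.2))

end EdgeLists

section Codes

open Finset

variable {S B : ℕ} {l : List (Fin 19 × Fin 19)}

lemma IsSimple.encodes_matrix (hS : 40 ≤ S) (hl : IsSimple l) :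
    Encodes S (matrix S l) (ofEdges l) := by
  induction l with
  | nil => simp [Encodes, matrix, ofEdges]
  | cons e l ih => exact (ih hl.of_cons).xor_edgeCode hS (hl.2 e List.mem_cons_self) hl.not_adj

lemma IsSimple.cycleDigits_eq (hS : ∑ n ∈ range 18, B ^ n * 19 ^ (n + 2) < 2 ^ S) (hS' : 40 ≤ S)
    (hl : IsSimple l) : cycleDigits S B l = cycleSeries B (ofEdges l) := by
  induction l with
  | nil => exact (cycleSeries_bot B).symm
  | cons e l ih => rw [cycleDigits, ih hl.of_cons, ofEdges,
      cycleSeries_sup_edge B (hl.2 e List.mem_cons_self) hl.not_adj,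
      entry_pathSumsFrom hS (hl.of_cons.encodes_matrix hS') le_rfl]

end Codes

section Solutions

open Finset

lemma isSimple_solution (i : Fin 3) : IsSimple (solution i) := by
  have : ∀ i, (solution i).Nodup ∧ ∀ e ∈ solution i, e.1 < e.2 := by decide +kernel
  exact isSimple_of_forall_lt (this i).1 (this i).2

lemma cycleCount_lt {V : Type*} [Fintype V] (hV : Fintype.card V = 19) (G : SimpleGraph V)
    {n : ℕ} (hn : n < 17) : cycleCount G (n + 3) < 2 ^ 100 :=
  calc cycleCount G (n + 3) ≤ 19 ^ (n + 3) := hV ▸ cycleCount_le_card_pow G (n + 1)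
    _ ≤ 19 ^ 19 := Nat.pow_le_pow_right (by norm_num) (by lia)
    _ < 2 ^ 100 := by norm_num

lemma cycleSeries_div_mod {V : Type*} {G : SimpleGraph V} {B : ℕ}
    (hB : ∀ n < 17, cycleCount G (n + 3) < B) {n : ℕ} (hn : n < 17) :
    cycleSeries B G / B ^ (n + 1) % B = cycleCount G (n + 3) :=
  sum_pow_succ_mul_div_mod hB hn

/-- Decoding needs a base exceeding all possible cycle counts, hence `2 ^ 100`. -/
lemma cycleDigits_solution (i : Fin 3) :
    cycleDigits 2000 (2 ^ 100) (solution i) = ∑ n ∈ range 17, (2 ^ 100) ^ (n + 1) * 2 := by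
  decide +revert +kernel

lemma isRPancyclic_solution (i : Fin 3) : IsRPancyclic (ofEdges (solution i)) 2 := by
  refine ⟨by simp, fun k hk hk' => ?_⟩
  obtain ⟨n, rfl⟩ := Nat.exists_eq_add_of_le' hk
  rw [Fintype.card_fin] at hk'
  have hn : n < 17 := by lia
  have count_lt (n) (hn : n < 17) : cycleCount (ofEdges (solution i)) (n + 3) < 2 ^ 100 :=
    cycleCount_lt (Fintype.card_fin 19) _ hn
  have series_eq : cycleSeries (2 ^ 100) (ofEdges (solution i)) =
      ∑ n ∈ range 17, (2 ^ 100) ^ (n + 1) * 2 := by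
    rw [← (isSimple_solution i).cycleDigits_eq (S := 2000) (by decide +kernel) (by norm_num),
      cycleDigits_solution]
  rw [← cycleSeries_div_mod count_lt hn, series_eq,
    sum_pow_succ_mul_div_mod (fun _ _ => by norm_num) hn]

lemma card_filter_degree_eq_of_iso {V W : Type*} [Fintype V] [Fintype W] {G : SimpleGraph V}
    {H : SimpleGraph W} [DecidableRel G.Adj] [DecidableRel H.Adj] (e : G ≃g H) (d : ℕ) :
    #{v | G.degree v = d} = #{w | H.degree w = d} :=
  card_equiv e.toEquiv fun v => by
    rw [mem_filter_univ, mem_filter_univ]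
    exact (e.degree_eq v).symm ▸ Iff.rfl

/-- The solutions have two, no and one vertices of degree four. -/
lemma isEmpty_iso_solution {i j : Fin 3} (hij : i ≠ j) :
    IsEmpty (ofEdges (solution i) ≃g ofEdges (solution j)) := by
  have injective : ∀ i j : Fin 3, #{v | (ofEdges (solution i)).degree v = 4} =
      #{v | (ofEdges (solution j)).degree v = 4} → i = j := by
    decide +kernel
  exact ⟨fun e => hij (injective i j (card_filter_degree_eq_of_iso e 4))⟩

lemma exists_iso_solution_of_listed {A : ℕ} {T : SimpleGraph (Fin 19)} (hT : Encodes 152 A T)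
    (hA : listed A) : ∃ i, Nonempty (T ≃g ofEdges (solution i)) := by
  have of_map (i : Fin 3) (f : Fin 19 ≃ Fin 19)
      (h : A = matrix 152 ((solution i).map (Prod.map f f))) :
      Nonempty (T ≃g ofEdges (solution i)) := by
    rw [hT.eq (h ▸ ((isSimple_solution i).map f).encodes_matrix (by norm_num))]
    exact ⟨(ofEdgesMapIso f _).symm⟩
  simp only [listed, List.any_eq_true, List.mem_finRange, true_and, Bool.or_eq_true,
    beq_iff_eq] at hA
  obtain ⟨i, r, h | h⟩ := hA
  exacts [⟨i, of_map i (Equiv.addLeft r) h⟩, ⟨i, of_map i (Equiv.subLeft r) h⟩]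

end Solutions

section Good

open Finset

lemma and_sum_sixteen_pow_eq_zero {n : ℕ} {d : ℕ → ℕ} (hd : ∀ i < n, d i < 8) :
    (∑ i ∈ range n, 16 ^ i * d i) &&& (∑ i ∈ range n, 16 ^ i * 8) = 0 := by
  induction n generalizing d with
  | zero => simp
  | succ n ih =>
    have sum_eq (f : ℕ → ℕ) : ∑ i ∈ range (n + 1), 16 ^ i * f i =
        16 * (∑ i ∈ range n, 16 ^ i * f (i + 1)) + f 0 := by
      simp only [sum_range_succ', pow_zero, one_mul, pow_succ', mul_assoc, mul_sum]
    have and_eq_zero {x y k : ℕ} (hk : k < 8) (hxy : x &&& y = 0) :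
        (16 * x + k) &&& (16 * y + 8) = 0 := by
      have and_eight : ∀ k < 8, k &&& 8 = 0 := by decide
      have hdiv : ((16 * x + k) &&& (16 * y + 8)) / 2 ^ 4 = 0 := by
        rw [Nat.and_div_two_pow, ← hxy]
        congr 1 <;> lia
      have hmod : ((16 * x + k) &&& (16 * y + 8)) % 2 ^ 4 = 0 := by
        rw [Nat.and_mod_two_pow, ← and_eight k hk]
        congr 1 <;> lia
      lia
    rw [sum_eq, sum_eq fun _ => 8]
    exact and_eq_zero (hd 0 n.succ_pos) (ih fun i hi => hd (i + 1) (Nat.succ_lt_succ hi))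

lemma good_of_forall_le_two {a : ℕ → ℕ} (ha : ∀ n < 17, a n ≤ 2) :
    good (∑ n ∈ range 17, 16 ^ (n + 1) * a n) := by
  let d : ℕ → ℕ
    | 0 => 7
    | n + 1 => a n + 5
  have hd : ∀ i < 18, d i < 8 := by
    rintro (_ | n) hn
    · exact (by norm_num : 7 < 8)
    · exact Nat.add_lt_add_right (Nat.lt_succ_iff.2 (ha n (by lia))) 5
  have add_eq : ∑ n ∈ range 17, 16 ^ (n + 1) * a n + 1574122160956548404567 =
      ∑ i ∈ range 18, 16 ^ i * d i := by
    rw [sum_range_succ' _ 17]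
    simp only [d, mul_add, sum_add_distrib, add_assoc]
    congr 1
  rw [good, add_eq, Nat.beq_eq]
  exact and_sum_sixteen_pow_eq_zero hd

end Good

section Codes

open Finset

variable {T G K : SimpleGraph (Fin 19)} {A M c D m : ℕ} {u w : Fin 19}

/-- `A` and `c` are the adjacency matrix and the cycle counts of `G`, as used by the search. -/
structure Codes (A c : ℕ) (G : SimpleGraph (Fin 19)) : Prop where
  encodes : Encodes 152 A G
  count : cycleSeries 16 G = c

lemma Encodes.entry_eq (hA : Encodes 152 A G) {d : ℕ} (hd : d ≤ 18) (u w : Fin 19) :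
    entry 152 (pathSumsFrom 152 16 d A (2 ^ u.val)) (2 ^ w.val) =
      pathSeries 16 d G (univ.erase u) u w :=
  entry_pathSumsFrom (by decide +kernel) hA hd u w

lemma Codes.sup_edge (h : Codes A c G) (huw : u ≠ w) (hG : ¬G.Adj u w) :
    Codes (A ^^^ edgeCode 152 (2 ^ u.val) (2 ^ w.val))
      (c + entry 152 (pathSumsFrom 152 16 18 A (2 ^ u.val)) (2 ^ w.val)) (G ⊔ edge u w) where
  encodes := h.encodes.xor_edgeCode (by norm_num) huw hG
  count := by rw [cycleSeries_sup_edge 16 huw hG, h.count, h.encodes.entry_eq le_rfl]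

lemma IsSimple.codes {l : List (Fin 19 × Fin 19)} (hl : IsSimple l) :
    Codes (matrix 152 l) (cycleDigits 152 16 l) (ofEdges l) where
  encodes := hl.encodes_matrix (by norm_num)
  count := (hl.cycleDigits_eq (by decide +kernel) (by norm_num)).symm

lemma cycleCount_eq_two (hT : IsRPancyclic T 2) {n : ℕ} (hn : n < 17) :
    cycleCount T (n + 3) = 2 :=
  hT.2 _ (by lia) (by rw [Fintype.card_fin]; lia)

lemma cycleCount_le_two (hT : IsRPancyclic T 2) (hG : G ≤ T) {n : ℕ} (hn : n < 17) :
    cycleCount G (n + 3) ≤ 2 :=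
  (cycleCount_mono hG (n + 1)).trans_eq (cycleCount_eq_two hT hn)

lemma cycleSeries_eq_target (hT : IsRPancyclic T 2) : cycleSeries 16 T = target := by
  calc cycleSeries 16 T = ∑ n ∈ range 17, 16 ^ (n + 1) * 2 :=
        sum_congr rfl fun n hn => by rw [cycleCount_eq_two hT (mem_range.1 hn)]
    _ = target := by rfl

lemma good_cycleSeries (hT : IsRPancyclic T 2) (hG : G ≤ T) : good (cycleSeries 16 G) :=
  good_of_forall_le_two fun _ hn => cycleCount_le_two hT hG hn

lemma Codes.div_mod_eq (h : Codes A c G) (hT : IsRPancyclic T 2) (hG : G ≤ T) :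
    c / 16 ^ 17 % 16 = cycleCount G 19 := by
  rw [← h.count]
  exact cycleSeries_div_mod (n := 16)
    (fun n hn => (cycleCount_le_two hT hG hn).trans_lt (by norm_num)) (by norm_num)

/-- The paths counted may be those of a subgraph `K`: its counts are smaller. -/
lemma Codes.good_add_entry (h : Codes A c G) (hT : IsRPancyclic T 2) (hM : Encodes 152 M K)
    (hK : K ≤ G) (huw : u ≠ w) (hG : ¬G.Adj u w) (hle : G ⊔ edge u w ≤ T) :
    good (c + entry 152 (pathSumsFrom 152 16 18 M (2 ^ u.val)) (2 ^ w.val)) := by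
  rw [← h.count, hM.entry_eq le_rfl, pathSeries_erase 16 fun h => hG (hK h), cycleSeries,
    ← sum_add_distrib]
  simp only [← mul_add]
  refine good_of_forall_le_two fun n hn => ?_
  calc cycleCount G (n + 3) + pathCount K (n + 2) u w
      ≤ cycleCount G (n + 3) + pathCount G (n + 2) u w := by grw [pathCount_mono hK]
    _ = cycleCount (G ⊔ edge u w) (n + 3) := (cycleCount_sup_edge huw hG n).symm
    _ ≤ 2 := cycleCount_le_two hT hle hn

lemma sum_two_pow_val_lt (s : Finset (Fin 19)) : ∑ i ∈ s, 2 ^ i.val < 2 ^ 19 := by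
  rw [← sum_image (f := fun i => 2 ^ i) Fin.val_injective.injOn]
  refine Nat.geomSum_lt le_rfl fun k hk => ?_
  obtain ⟨i, -, rfl⟩ := mem_image.1 hk
  exact i.isLt

lemma bits_sum_two_pow (s : Finset (Fin 19)) : bits (∑ i ∈ s, 2 ^ i.val) = s := by
  refine image_injective Fin.val_injective ?_
  rw [image_val_bits (sum_two_pow_val_lt s), ← sum_image (f := fun i => 2 ^ i)
    Fin.val_injective.injOn, toFinset_bitIndices_sum_two_pow]

lemma goodEnds_eq_sum (c D : ℕ) (hm : m < 2 ^ 19) : goodEnds c D m =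
    ∑ w ∈ bits m with good (c + entry 152 D (2 ^ w.val)), 2 ^ w.val := by
  rw [goodEnds, sumBits_eq_sum _ hm, sum_filter]
  simp only [Bool.cond_eq_ite]

lemma goodEnds_lt (c D : ℕ) (hm : m < 2 ^ 19) : goodEnds c D m < 2 ^ 19 :=
  goodEnds_eq_sum c D hm ▸ sum_two_pow_val_lt _

lemma mem_bits_goodEnds (hm : m < 2 ^ 19) :
    w ∈ bits (goodEnds c D m) ↔ w ∈ bits m ∧ good (c + entry 152 D (2 ^ w.val)) := by
  rw [goodEnds_eq_sum c D hm, bits_sum_two_pow, mem_filter]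

lemma Codes.exists_of_nextChord (h : Codes A c G) (hT : IsRPancyclic T 2)
    {next : ℕ → ℕ → ℕ → Bool} (hm : m < 2 ^ 19) (hnext : nextChord next A c (2 ^ u.val) m)
    (hw : w ∈ bits m) (huw : u ≠ w) (hG : ¬G.Adj u w) (hle : G ⊔ edge u w ≤ T) :
    ∃ A' c', Codes A' c' (G ⊔ edge u w) ∧ next (2 ^ w.val) A' c' := by
  have hcode := h.sup_edge huw hG
  refine ⟨_, _, hcode, ?_⟩
  have hgood := good_cycleSeries hT hle
  rw [hcode.count] at hgood
  simpa [force_eq, hgood] using (allBits_iff _ hm).1 hnext w hw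

/-- The conclusion of a successful search branch towards `T`. -/
def IsListed (T : SimpleGraph (Fin 19)) : Prop :=
  ∃ A, Encodes 152 A T ∧ listed A

lemma Codes.isListed_of_lastChord (h : Codes A c G) (hT : IsRPancyclic T 2) (hm : m < 2 ^ 19)
    (hlast : lastChord A c (2 ^ u.val) m) (hw : w ∈ bits m) (huw : u ≠ w) (hG : ¬G.Adj u w)
    (hTG : T = G ⊔ edge u w) : IsListed T := by
  have hcode := h.sup_edge huw hG
  have hcount : c + entry 152 (pathSumsFrom 152 16 18 A (2 ^ u.val)) (2 ^ w.val) = target := by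
    rw [← hcode.count, ← hTG, cycleSeries_eq_target hT]
  have hmod : (c + entry 152 (pathSumsFrom 152 16 5 A (2 ^ u.val)) (2 ^ w.val)) % 16 ^ 5 =
      target % 16 ^ 5 := by
    rw [← hcount, h.encodes.entry_eq le_rfl, h.encodes.entry_eq (by norm_num)]
    exact ((pathSeries_add_modEq 16 5 13 ..).add_left c).symm
  refine ⟨_, hTG ▸ hcode.encodes, ?_⟩
  simpa only [hcount, hmod, Nat.beq_refl, Bool.not_true, Bool.false_or] using
    (allBits_iff _ hm).1 hlast w hw

end Codes

section MissingEdges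

variable {V : Type*} {D G T : SimpleGraph V} {u w : V}

lemma ncard_edgeSet_sdiff_edge [Finite V] (h : D.Adj u w) :
    (D \ edge u w).edgeSet.ncard + 1 = D.edgeSet.ncard := by
  rw [edgeSet_sdiff, edgeSet_edge_of_ne h.ne,
    Set.ncard_sdiff_singleton_add_one ((mem_edgeSet D).2 h)]

lemma ncard_edgeSet_sdiff_sup_edge [Finite V] (h : (T \ G).Adj u w) :
    (T \ (G ⊔ edge u w)).edgeSet.ncard + 1 = (T \ G).edgeSet.ncard := by
  rw [← sdiff_sdiff, ncard_edgeSet_sdiff_edge h]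

lemma sup_edge_le_of_le (hG : G ≤ T) (h : T.Adj u w) : G ⊔ edge u w ≤ T :=
  sup_le hG ((edge_le_iff T).2 (Or.inr h))

lemma eq_sup_edge_of_ncard_le_one [Finite V] (hG : G ≤ T)
    (hcard : (T \ G).edgeSet.ncard ≤ 1) (h : (T \ G).Adj u w) : T = G ⊔ edge u w := by
  have hcard' : (T \ (G ⊔ edge u w)).edgeSet.ncard = 0 := by
    have := ncard_edgeSet_sdiff_sup_edge h
    lia
  rw [Set.ncard_eq_zero, edgeSet_eq_empty, sdiff_eq_bot_iff] at hcard'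
  exact le_antisymm hcard' (sup_edge_le_of_le hG h.1)

lemma exists_adj_forall_le [LinearOrder V] [Finite V] (hD : D ≠ ⊥) :
    ∃ u w, u < w ∧ D.Adj u w ∧ ∀ u' w', u' < w' → D.Adj u' w' → u ≤ u' := by
  have lower_nonempty : {u | ∃ w, u < w ∧ D.Adj u w}.Nonempty := by
    obtain ⟨u, w, h⟩ := ne_bot_iff_exists_adj.1 hD
    rcases h.ne.lt_or_gt with hlt | hlt
    exacts [⟨u, w, hlt, h⟩, ⟨w, u, hlt, h.symm⟩]
  obtain ⟨u, ⟨w, hlt, h⟩, hmin⟩ := Set.exists_min_image _ id (Set.toFinite _) lower_nonempty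
  exact ⟨u, w, hlt, h, fun u' w' hlt' h' => hmin u' ⟨w', hlt', h'⟩⟩

end MissingEdges

section Extend

open Finset

variable {T G : SimpleGraph (Fin 19)} {A c n : ℕ} {x : Fin 19} {cand : ℕ → ℕ}

lemma above_lt (u : Fin 19) : above (2 ^ u.val) < 2 ^ 19 :=
  Nat.sub_lt (by norm_num) (by positivity)

lemma mem_bits_above {u w : Fin 19} : w ∈ bits (above (2 ^ u.val)) ↔ u < w := by
  rw [above, ← pow_succ, ← Fin.val_succ, bits_sub_two_pow, mem_filter_univ, Fin.val_succ]
  exact Nat.succ_le_iff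

lemma mem_bits_sub_two_pow {u : Fin 19} : u ∈ bits (2 ^ 19 - 2 ^ x.val) ↔ x ≤ u := by
  rw [← Fin.val_castSucc, bits_sub_two_pow, mem_filter_univ]
  rfl

lemma sub_two_pow_lt (x : Fin 19) : 2 ^ 19 - 2 ^ x.val < 2 ^ 19 :=
  Nat.sub_lt (by norm_num) (by positivity)

/-- Every edge of `T` missing from `G` is a candidate of `extend` called with `x` and `cand`. -/
def Candidates (T G : SimpleGraph (Fin 19)) (x : Fin 19) (cand : ℕ → ℕ) : Prop :=
  (∀ u : Fin 19, cand (2 ^ u.val) < 2 ^ 19) ∧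
    ∀ u w, u < w → (T \ G).Adj u w → x ≤ u ∧ w ∈ bits (cand (2 ^ u.val))

lemma candidates_above (T G : SimpleGraph (Fin 19)) : Candidates T G 0 above :=
  ⟨above_lt, fun u _ hlt _ => ⟨u.zero_le, mem_bits_above.2 hlt⟩⟩

lemma Candidates.goodEnds {G' : SimpleGraph (Fin 19)} {u : Fin 19} {A' c' : ℕ}
    (hcand : Candidates T G x cand) (hT : IsRPancyclic T 2) (hA : Encodes 152 A G)
    (h' : Codes A' c' G') (hGG' : G ≤ G') (hG'T : G' ≤ T)
    (hmin : ∀ u' w', u' < w' → (T \ G).Adj u' w' → u ≤ u') :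
    Candidates T G' u fun v => goodEnds c' (pathSumsFrom 152 16 18 A v) (cand v) := by
  refine ⟨fun v => goodEnds_lt _ _ (hcand.1 v), fun u' w' hlt hadj => ?_⟩
  have hadj' : (T \ G).Adj u' w' := ⟨hadj.1, fun hG => hadj.2 (hGG' hG)⟩
  exact ⟨hmin u' w' hlt hadj', (mem_bits_goodEnds (hcand.1 u')).2 ⟨(hcand.2 u' w' hlt hadj').2,
    h'.good_add_entry hT hA hGG' hlt.ne hadj.2 (sup_edge_le_of_le hG'T hadj.1)⟩⟩

lemma Codes.sdiff_ne_bot (h : Codes A c G) (hT : IsRPancyclic T 2) (hGT : G ≤ T)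
    (hc : !c.beq target) : T \ G ≠ ⊥ := by
  rintro hbot
  rw [← h.count, hGT.antisymm (sdiff_eq_bot_iff.1 hbot), cycleSeries_eq_target hT] at hc
  simp at hc

lemma Codes.isListed_of_extend (hT : IsRPancyclic T 2) (h : Codes A c G) (hGT : G ≤ T)
    (hcard : (T \ G).edgeSet.ncard ≤ n + 1) (hcand : Candidates T G x cand)
    (hext : extend n (2 ^ x.val) cand A c) : IsListed T := by
  induction n generalizing G A c x cand with
  | zero =>
    obtain ⟨hc, hall⟩ := Bool.and_eq_true_iff.1 hext
    obtain ⟨u, w, hlt, hadj, -⟩ := exists_adj_forall_le (h.sdiff_ne_bot hT hGT hc)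
    obtain ⟨hx, hw⟩ := hcand.2 u w hlt hadj
    exact h.isListed_of_lastChord hT (hcand.1 u)
      ((allBits_iff _ (sub_two_pow_lt x)).1 hall u (mem_bits_sub_two_pow.2 hx)) hw hlt.ne hadj.2
      (eq_sup_edge_of_ncard_le_one hGT hcard hadj)
  | succ n ih =>
    obtain ⟨hc, hall⟩ := Bool.and_eq_true_iff.1 hext
    obtain ⟨u, w, hlt, hadj, hmin⟩ := exists_adj_forall_le (h.sdiff_ne_bot hT hGT hc)
    obtain ⟨hx, hw⟩ := hcand.2 u w hlt hadj
    have hle : G ⊔ edge u w ≤ T := sup_edge_le_of_le hGT hadj.1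
    obtain ⟨A', c', h', hext'⟩ := h.exists_of_nextChord hT (hcand.1 u)
      ((allBits_iff _ (sub_two_pow_lt x)).1 hall u (mem_bits_sub_two_pow.2 hx)) hw hlt.ne hadj.2 hle
    have hcard' : (T \ (G ⊔ edge u w)).edgeSet.ncard ≤ n + 1 := by
      have := ncard_edgeSet_sdiff_sup_edge hadj
      lia
    exact ih h' hle hcard' (hcand.goodEnds hT h.encodes h' le_sup_left hle hmin) hext'

end Extend

section Degrees

variable {V : Type*} {G G' : SimpleGraph V} {u v w : V}

/-- The degree function of `G`. -/
noncomputable def deg (G : SimpleGraph V) (v : V) : ℕ := (G.neighborSet v).ncard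

lemma deg_bot : deg (⊥ : SimpleGraph V) = 0 := by
  ext v
  simp [deg]

lemma deg_mono [Finite V] (h : G ≤ G') (v : V) : deg G v ≤ deg G' v :=
  Set.ncard_le_ncard fun _ hw => h hw

lemma deg_edge [DecidableEq V] (huw : u ≠ w) : deg (edge u w) = Pi.single u 1 + Pi.single w 1 := by
  ext x
  rw [deg, Pi.add_apply]
  obtain rfl | hxu := eq_or_ne x u
  · have neighborSet_eq : (edge x w).neighborSet x = {w} := by
      ext y
      simp only [mem_neighborSet, edge_adj, Set.mem_singleton_iff]
      grind
    rw [neighborSet_eq, Set.ncard_singleton, Pi.single_eq_same, Pi.single_eq_of_ne huw, add_zero]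
  obtain rfl | hxw := eq_or_ne x w
  · have neighborSet_eq : (edge u x).neighborSet x = {u} := by
      ext y
      simp only [mem_neighborSet, edge_adj, Set.mem_singleton_iff]
      grind
    rw [neighborSet_eq, Set.ncard_singleton, Pi.single_eq_same, Pi.single_eq_of_ne hxu]
  have neighborSet_eq : (edge u w).neighborSet x = ∅ := by
    ext y
    simp [edge_adj, hxu, hxw]
  rw [neighborSet_eq, Set.ncard_empty, Pi.single_eq_of_ne hxu, Pi.single_eq_of_ne hxw, add_zero]

lemma deg_sup_edge [Finite V] [DecidableEq V] (huw : u ≠ w) (h : ¬G.Adj u w) :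
    deg (G ⊔ edge u w) = deg G + Pi.single u 1 + Pi.single w 1 := by
  rw [add_assoc, ← deg_edge huw]
  ext v
  rw [deg, neighborSet_sup, Set.ncard_union_eq (Set.disjoint_left.2 _)]
  · rfl
  · intro y hG hedge
    rw [mem_neighborSet, edge_adj] at hedge
    obtain ⟨⟨rfl, rfl⟩ | ⟨rfl, rfl⟩, -⟩ := hedge
    exacts [h hG, h (G.adj_symm hG)]

lemma deg_sdiff_comm [Finite V] (h : deg G = deg G') : deg (G \ G') = deg (G' \ G) := by
  ext v
  have hG := Set.ncard_sdiff_add_ncard (G.neighborSet v) (G'.neighborSet v)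
  have hG' := Set.ncard_sdiff_add_ncard (G'.neighborSet v) (G.neighborSet v)
  rw [Set.union_comm] at hG'
  have : (G.neighborSet v).ncard = (G'.neighborSet v).ncard := congrFun h v
  rw [deg, deg, neighborSet_sdiff, neighborSet_sdiff]
  lia

lemma exists_adj_not_adj_of_deg_lt [Finite V] (h : deg G v < deg G' v) :
    ∃ w, G'.Adj v w ∧ ¬G.Adj v w :=
  Set.exists_mem_notMem_of_ncard_lt_ncard h

lemma adj_of_deg_eq [Finite V] [DecidableEq V] (h : G ≤ G')
    (hdeg : deg G' = deg G + Pi.single u 1 + Pi.single w 1) : G'.Adj u w := by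
  obtain ⟨x, hux, hG⟩ := exists_adj_not_adj_of_deg_lt (G := G) (G' := G') (v := u) <| by
    rw [hdeg, Pi.add_apply, Pi.add_apply, Pi.single_eq_same]
    lia
  have single_le : (Pi.single x 1 : V → ℕ) x ≤ (Pi.single w 1 : V → ℕ) x := by
    have deg_le := deg_mono (sup_edge_le_of_le h hux) x
    rw [deg_sup_edge hux.ne hG, hdeg] at deg_le
    exact Nat.add_le_add_iff_left.1 deg_le
  obtain rfl : x = w := by
    by_contra hne
    rw [Pi.single_eq_same, Pi.single_eq_of_ne hne] at single_le
    exact one_ne_zero (Nat.le_zero.1 single_le)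
  exact hux

lemma deg_cycleGraph (n : ℕ) : deg (cycleGraph (n + 3)) = 2 := by
  ext v
  rw [deg, ← Nat.card_coe_set_eq, Nat.card_eq_fintype_card, card_neighborSet_eq_degree,
    cycleGraph_degree_three_le]
  rfl

lemma deg_eq_of_mem_cycles {n : ℕ} {E G : SimpleGraph (Fin (n + 3))} (hE : E ∈ cycles G (n + 3)) :
    deg E = deg (cycleGraph (n + 3)) := by
  obtain ⟨-, p, rfl⟩ := hE
  rw [deg_cycleGraph]
  ext v
  obtain ⟨w, rfl⟩ := (Finite.injective_iff_surjective.1 p.injective) v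
  rw [deg, neighborSet_map, Set.ncard_map]
  exact congrFun (deg_cycleGraph n) w

end Degrees

section Trail

open Finset

variable {T E F K : SimpleGraph (Fin 19)} {n R A c L : ℕ} {s u v w : Fin 19}

lemma two_pow_val_inj : 2 ^ u.val = 2 ^ w.val ↔ u = w :=
  (Nat.pow_right_injective le_rfl).eq_iff.trans Fin.val_inj

lemma next_two_pow (v : Fin 19) : next (2 ^ v.val) = 2 ^ (v + 1).val := by
  decide +revert +kernel

lemma prev_two_pow (v : Fin 19) : prev (2 ^ v.val) = 2 ^ (v - 1).val := by
  decide +revert +kernel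

lemma mem_bits_next_add_prev : w ∈ bits (next (2 ^ s.val) + prev (2 ^ s.val)) ↔
    (cycleGraph 19).Adj s w := by
  rw [next_two_pow, prev_two_pow, mem_bits, cycleGraph_adj]
  decide +revert +kernel

open Classical in
/-- The set of edges `{i, i + 1}` of `K`, as a number. -/
noncomputable def mask (K : SimpleGraph (Fin 19)) : ℕ := ∑ i with K.Adj i (i + 1), 2 ^ i.val

lemma mem_bits_mask {i : Fin 19} : i ∈ bits (mask K) ↔ K.Adj i (i + 1) := by
  classical rw [mask, bits_sum_two_pow, mem_filter_univ]

lemma mask_and_two_pow_eq_zero {i : Fin 19} (h : ¬K.Adj i (i + 1)) : mask K &&& 2 ^ i.val = 0 := by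
  rw [← mem_bits_mask, mem_bits] at h
  rw [Nat.and_two_pow, Bool.eq_false_of_not_eq_true h, Bool.toNat_false, zero_mul]

lemma mask_bot : mask ⊥ = 0 := by
  simp [mask]

lemma edge_add_one_adj (i j : Fin 19) : (edge i (i + 1)).Adj j (j + 1) ↔ j = i := by
  rw [edge_adj]
  decide +revert +kernel

lemma mask_sup_edge {i : Fin 19} (h : ¬K.Adj i (i + 1)) :
    mask (K ⊔ edge i (i + 1)) = mask K + 2 ^ i.val := by
  classical
  simp only [mask, sup_adj, edge_add_one_adj]
  rw [filter_or, filter_eq' univ i, if_pos (mem_univ i), sum_union (by simpa using h),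
    sum_singleton]

/-- A partial decomposition of the symmetric difference of the Hamiltonian cycle `E` of `T` and the
cycle `0, 1, …, 18` into closed trails whose edges alternate between the two. The trails found so
far consist of the chords `F` of `E` and the edges `K` of the other cycle; at most `n + 1` edges of
`T` are unknown. The numbers `R`, `A`, `c` are the arguments of the search. -/
structure Trails (T E : SimpleGraph (Fin 19)) (n R A c : ℕ) (F K : SimpleGraph (Fin 19)) :
    Prop where
  chords_le : F ≤ E \ cycleGraph 19
  removed_le : K ≤ cycleGraph 19 \ E
  mask_eq : mask K = R
  codes : Codes A c (cycleGraph 19 ⊔ F)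
  ncard_le : (T \ (cycleGraph 19 ⊔ F)).edgeSet.ncard ≤ n + 1

lemma Trails.remove_edge (h : Trails T E n R A c F K) {i : Fin 19}
    (hi : (cycleGraph 19 \ E).Adj i (i + 1)) (hK : ¬K.Adj i (i + 1)) {p : Bool}
    (hp : !(R &&& 2 ^ i.val).beq 0 || p) :
    Trails T E n (R + 2 ^ i.val) A c F (K ⊔ edge i (i + 1)) ∧ p := by
  refine ⟨{ h with removed_le := ?_, mask_eq := ?_ }, ?_⟩
  · exact sup_edge_le_of_le h.removed_le hi
  · rw [mask_sup_edge hK, h.mask_eq]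
  · rw [← h.mask_eq, mask_and_two_pow_eq_zero hK] at hp
    exact hp

lemma Trails.exists_of_leave (h : Trails T E n R A c F K) (hE : E ∈ cycles T 19)
    (hdeg : deg F = deg K + Pi.single s 1 + Pi.single v 1)
    {arrive : ℕ → ℕ → ℕ → ℕ → ℕ → Bool} (hleave : leave arrive R (2 ^ s.val) (2 ^ v.val) A c) :
    ∃ K' R' u, Trails T E n R' A c F K' ∧ deg F + Pi.single u 1 = deg K' + Pi.single s 1 ∧
      arrive R' (2 ^ s.val) (2 ^ u.val) A c := by
  have deg_single_add {K' : SimpleGraph (Fin 19)} {u : Fin 19}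
      (hK' : deg K' = deg K + Pi.single v 1 + Pi.single u 1) :
      deg F + Pi.single u 1 = deg K' + Pi.single s 1 := by
    rw [hdeg, hK']
    abel
  have deg_lt : deg K v < deg (cycleGraph 19 \ E) v := by
    have deg_le := deg_mono h.chords_le v
    rw [hdeg, deg_sdiff_comm (deg_eq_of_mem_cycles hE)] at deg_le
    simp only [Pi.add_apply, Pi.single_eq_same] at deg_le
    lia
  obtain ⟨w, hw, hKw⟩ := exists_adj_not_adj_of_deg_lt deg_lt
  simp only [leave, force_eq, next_two_pow, prev_two_pow, Bool.and_eq_true] at hleave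
  rcases cycleGraph_adj.1 hw.1 with hvw | hwv
  · obtain rfl : w = v - 1 := by rw [← hvw, sub_sub_cancel]
    obtain ⟨h', harrive⟩ := h.remove_edge (i := v - 1) (by simpa using hw.symm)
      (by simpa using fun hK => hKw (K.adj_symm hK)) hleave.2
    rw [sub_add_cancel] at h'
    refine ⟨_, _, _, h', deg_single_add ?_, harrive⟩
    rw [deg_sup_edge hw.ne' fun hK => hKw (K.adj_symm hK), add_right_comm]
  · obtain rfl : w = v + 1 := by rw [← hwv, add_sub_cancel]
    obtain ⟨h', harrive⟩ := h.remove_edge hw hKw hleave.1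
    exact ⟨_, _, _, h', deg_single_add (deg_sup_edge hw.ne hKw), harrive⟩

lemma sdiff_sup_adj {V : Type*} {T E F H : SimpleGraph V} {u w : V} (hET : E ≤ T)
    (huw : (E \ H).Adj u w) (hF : ¬F.Adj u w) : (T \ (H ⊔ F)).Adj u w :=
  ⟨hET huw.1, fun h => h.elim huw.2 hF⟩

lemma Trails.sup_edge {A' c' : ℕ} (h : Trails T E (n + 1) R A c F K) (hET : E ≤ T)
    (huw : (E \ cycleGraph 19).Adj u w) (hF : ¬F.Adj u w)
    (h' : Codes A' c' (cycleGraph 19 ⊔ F ⊔ edge u w)) :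
    Trails T E n R A' c' (F ⊔ edge u w) K where
  chords_le := sup_edge_le_of_le h.chords_le huw
  removed_le := h.removed_le
  mask_eq := h.mask_eq
  codes := sup_assoc (cycleGraph 19) F (edge u w) ▸ h'
  ncard_le := by
    have := ncard_edgeSet_sdiff_sup_edge (sdiff_sup_adj hET huw hF)
    have := h.ncard_le
    rw [← sup_assoc]
    lia

/-- `T` is 2-pancyclic with Hamiltonian cycles `0, 1, …, 18` and `E`. -/
structure HamiltonianPair (T E : SimpleGraph (Fin 19)) : Prop where
  isRPancyclic : IsRPancyclic T 2
  cycleGraph_le : cycleGraph 19 ≤ T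
  mem_cycles : E ∈ cycles T 19
  ne : E ≠ cycleGraph 19

lemma HamiltonianPair.cycleCount_eq_two (hE : HamiltonianPair T E) {G : SimpleGraph (Fin 19)}
    (hGT : G ≤ T) (hG : cycleGraph 19 ≤ G) (hEG : E ≤ G) : cycleCount G 19 = 2 := by
  have cycleGraph_mem : cycleGraph 19 ∈ cycles G 19 :=
    ⟨hG, Function.Embedding.refl _, (map_id _).symm⟩
  have E_mem : E ∈ cycles G 19 := ⟨hEG, hE.mem_cycles.2⟩
  refine (cycleCount_le_two hE.isRPancyclic hGT (n := 16) (by norm_num)).antisymm ?_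
  rw [cycleCount_eq_ncard_cycles G 17]
  exact (Set.ncard_pair hE.ne).ge.trans (Set.ncard_le_ncard (Set.pair_subset E_mem cycleGraph_mem))

lemma Trails.le (h : Trails T E n R A c F K) (hE : HamiltonianPair T E) :
    cycleGraph 19 ⊔ F ≤ T :=
  sup_le hE.cycleGraph_le (h.chords_le.trans (sdiff_le.trans hE.mem_cycles.1))

lemma Trails.exists_chord (h : Trails T E n R A c F K) (hE : HamiltonianPair T E)
    (hc : c / 16 ^ 17 % 16 ≠ 2) : ∃ u w, u < w ∧ (E \ cycleGraph 19).Adj u w ∧ ¬F.Adj u w := by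
  have hEF : E \ (cycleGraph 19 ⊔ F) ≠ ⊥ := fun hbot => hc <| by
    rw [h.codes.div_mod_eq hE.isRPancyclic (h.le hE)]
    exact hE.cycleCount_eq_two (h.le hE) le_sup_left (sdiff_eq_bot_iff.1 hbot)
  obtain ⟨u, w, hlt, hadj, -⟩ := exists_adj_forall_le hEF
  rw [← sdiff_sdiff] at hadj
  exact ⟨u, w, hlt, hadj⟩

lemma Trails.exists_chord_of_ne (h : Trails T E n R A c F K) (hE : E ∈ cycles T 19)
    (hdeg : deg F + Pi.single u 1 = deg K + Pi.single s 1) (hus : u ≠ s) :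
    ∃ w, (E \ cycleGraph 19).Adj u w ∧ ¬F.Adj u w := by
  apply exists_adj_not_adj_of_deg_lt
  have deg_le := deg_mono h.removed_le u
  rw [deg_sdiff_comm (deg_eq_of_mem_cycles hE).symm] at deg_le
  have deg_add_one := congrFun hdeg u
  simp only [Pi.add_apply, Pi.single_eq_same, Pi.single_eq_of_ne hus] at deg_add_one
  lia

lemma Trails.isListed_or_exists_of_arrive (h : Trails T E n R A c F K) (hE : HamiltonianPair T E)
    {C : SimpleGraph (Fin 19)} (hL : Encodes 152 L C) (hC : E \ cycleGraph 19 ≤ C)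
    (hdeg : deg F + Pi.single u 1 = deg K + Pi.single s 1)
    {branch : ℕ → ℕ → ℕ → ℕ → ℕ → ℕ → Bool}
    (harrive : arrive L (extend n 1 above) branch R (2 ^ s.val) (2 ^ u.val) A c) :
    IsListed T ∨ ∃ s v w : Fin 19, ∃ m < 2 ^ 19, w ∈ bits m ∧ (E \ cycleGraph 19).Adj v w ∧
      ¬F.Adj v w ∧ deg (F ⊔ edge v w) = deg K + Pi.single s 1 + Pi.single w 1 ∧
      branch R (2 ^ s.val) A c (2 ^ v.val) m := by
  have mem_bits_neighbors {v w : Fin 19} {m : ℕ} (hw : w ∈ bits m)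
      (hvw : (E \ cycleGraph 19).Adj v w) : w ∈ bits (L / (2 ^ v.val) ^ 152 &&& m) := by
    classical
    rw [hL.bits_neighbors, mem_filter]
    exact ⟨hw, hC hvw⟩
  have full_lt : full < 2 ^ 19 := by norm_num [full]
  simp only [arrive, Bool.cond_eq_ite, Nat.beq_eq, two_pow_val_inj] at harrive
  split_ifs at harrive with hus hc
  · exact Or.inl <| h.codes.isListed_of_extend (x := 0) hE.isRPancyclic (h.le hE) h.ncard_le
      (candidates_above _ _) harrive
  · subst hus
    obtain ⟨v, w, hlt, hvw, hF⟩ := h.exists_chord hE hc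
    refine Or.inr ⟨v, v, w, _, Nat.and_lt_two_pow _ (above_lt v),
      mem_bits_neighbors (mem_bits_above.2 hlt) hvw, hvw, hF, ?_,
      (allBits_iff _ full_lt).1 harrive v (bits_full ▸ mem_univ v)⟩
    rw [deg_sup_edge hvw.ne hF, add_right_cancel hdeg]
  · obtain ⟨w, huw, hF⟩ := h.exists_chord_of_ne hE.mem_cycles hdeg hus
    refine Or.inr ⟨s, u, w, _, Nat.and_lt_two_pow _ full_lt,
      mem_bits_neighbors (bits_full ▸ mem_univ w) huw, huw, hF, ?_, harrive⟩
    rw [deg_sup_edge huw.ne hF, hdeg]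

lemma Trails.cycleGraph_adj_of_deg_eq (h : Trails T E n R A c F K) (hE : HamiltonianPair T E)
    (hvw : (E \ cycleGraph 19).Adj v w) (hT : T = cycleGraph 19 ⊔ F ⊔ edge v w)
    (hdeg : deg (F ⊔ edge v w) = deg K + Pi.single s 1 + Pi.single w 1) :
    (cycleGraph 19).Adj s w := by
  have sdiff_eq : E \ cycleGraph 19 = F ⊔ edge v w := by
    refine le_antisymm (sdiff_le_iff.2 ?_) (sup_edge_le_of_le h.chords_le hvw)
    rw [← sup_assoc, ← hT]
    exact hE.mem_cycles.1
  rw [← sdiff_eq, deg_sdiff_comm (deg_eq_of_mem_cycles hE.mem_cycles)] at hdeg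
  exact (adj_of_deg_eq h.removed_le hdeg).1

lemma Trails.isListed_of_trail (h : Trails T E n R A c F K) (hE : HamiltonianPair T E)
    {C : SimpleGraph (Fin 19)} (hL : Encodes 152 L C) (hC : E \ cycleGraph 19 ≤ C)
    (hdeg : deg F = deg K + Pi.single s 1 + Pi.single v 1)
    (htrail : trail L n R (2 ^ s.val) (2 ^ v.val) A c) : IsListed T := by
  have hET : E ≤ T := hE.mem_cycles.1
  induction n generalizing R A c F K s v with
  | zero =>
    obtain ⟨K, R, u, h, hdeg, harrive⟩ := h.exists_of_leave hE.mem_cycles hdeg htrail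
    obtain hT | ⟨s, v, w, m, hm, hw, hvw, hF, hdeg, hlast⟩ :=
      h.isListed_or_exists_of_arrive hE hL hC hdeg harrive
    · exact hT
    have hadj := sdiff_sup_adj hET hvw hF
    have hT := eq_sup_edge_of_ncard_le_one (h.le hE) h.ncard_le hadj
    have hsw := h.cycleGraph_adj_of_deg_eq hE hvw hT hdeg
    refine h.codes.isListed_of_lastChord hE.isRPancyclic (Nat.and_lt_two_pow _ hm) hlast ?_
      hvw.ne hadj.2 hT
    rw [bits_and, mem_inter]
    exact ⟨mem_bits_next_add_prev.2 hsw, hw⟩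
  | succ n ih =>
    obtain ⟨K, R, u, h, hdeg, harrive⟩ := h.exists_of_leave hE.mem_cycles hdeg htrail
    obtain hT | ⟨s, v, w, m, hm, hw, hvw, hF, hdeg, hnext⟩ :=
      h.isListed_or_exists_of_arrive hE hL hC hdeg harrive
    · exact hT
    have hadj := sdiff_sup_adj hET hvw hF
    obtain ⟨A', c', h', htrail⟩ := h.codes.exists_of_nextChord hE.isRPancyclic hm hnext hw hvw.ne
      hadj.2 (sup_edge_le_of_le (h.le hE) hadj.1)
    exact ih (h.sup_edge hET hvw hF h') hdeg htrail

end Trail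

section Rotation

variable {T E : SimpleGraph (Fin 19)}

lemma exists_not_and_add_one {n : ℕ} {P : Fin (n + 1) → Prop} {i j : Fin (n + 1)} (hi : ¬P i)
    (hj : P j) : ∃ k, ¬P k ∧ P (k + 1) := by
  by_contra! hP
  have not_add (k : Fin (n + 1)) : ¬P (i + k) := by
    induction k using Fin.induction with
    | zero => rwa [add_zero]
    | succ k ih =>
      rw [← Fin.coeSucc_eq_succ, ← add_assoc]
      exact hP _ ih
  exact not_add (j - i) (by rwa [add_sub_cancel])

lemma le_ncard_edgeSet_of_forall_adj_add {n : ℕ} [NeZero n] {K : SimpleGraph (Fin n)} {a : Fin n}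
    (ha : a + a ≠ 0) (h : ∀ i, K.Adj i (i + a)) : n ≤ K.edgeSet.ncard := by
  have edge_injective : Function.Injective fun i => s(i, i + a) := by
    intro i j hij
    rcases Sym2.eq_iff.1 hij with ⟨hij, -⟩ | ⟨hi, hj⟩
    · exact hij
    · rw [hi, add_assoc, add_eq_left] at hj
      exact absurd hj ha
  calc n = (Set.range fun i => s(i, i + a)).ncard := by
        rw [← Set.image_univ, Set.ncard_image_of_injective _ edge_injective, Set.ncard_univ,
          Nat.card_fin]
    _ ≤ K.edgeSet.ncard := Set.ncard_le_ncard (Set.range_subset_iff.2 h)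

lemma eq_of_le_of_deg_eq {V : Type*} [Finite V] {G G' : SimpleGraph V} (hle : G ≤ G')
    (hdeg : deg G = deg G') : G = G' := by
  refine hle.antisymm fun v w hw => ?_
  have : G.neighborSet v = G'.neighborSet v :=
    Set.eq_of_subset_of_ncard_le (fun _ h => hle h) (congrFun hdeg v).ge
  exact this.ge hw

lemma ncard_edgeSet_sdiff_cycleGraph_le (hT : cycleGraph 19 ≤ T) :
    (T \ cycleGraph 19).edgeSet.ncard + 19 ≤ T.edgeSet.ncard := by
  have le_ncard := le_ncard_edgeSet_of_forall_adj_add (K := cycleGraph 19) (a := 1) (by decide)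
    cycleGraph_adj_add_one
  rw [edgeSet_sdiff, ← Set.ncard_sdiff_add_ncard_of_subset (edgeSet_mono hT)]
  exact Nat.add_le_add_left le_ncard _

lemma two_le_min_sub {u w : Fin 19} (huw : u ≠ w) (h : ¬(cycleGraph 19).Adj u w) :
    2 ≤ min (u - w) (w - u) := by
  decide +revert +kernel

lemma min_sub_le {u w : Fin 19} : min (u - w) (w - u) ≤ 9 := by
  decide +revert +kernel

lemma HamiltonianPair.exists_longest_chord (hE : HamiltonianPair T E) :
    ∃ a : Fin 19, 2 ≤ a ∧ a ≤ 9 ∧ (∃ i, E.Adj i (i + a)) ∧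
      ∀ u w, (E \ cycleGraph 19).Adj u w → min (u - w) (w - u) ≤ a := by
  have sdiff_ne_bot : E \ cycleGraph 19 ≠ ⊥ := fun hbot =>
    hE.ne (eq_of_le_of_deg_eq (sdiff_eq_bot_iff.1 hbot) (deg_eq_of_mem_cycles hE.mem_cycles))
  obtain ⟨u, w, huw⟩ := ne_bot_iff_exists_adj.1 sdiff_ne_bot
  obtain ⟨⟨u, w⟩, ⟨huw, hH⟩, hmax⟩ := Set.exists_max_image
    {e : Fin 19 × Fin 19 | (E \ cycleGraph 19).Adj e.1 e.2}
    (fun e => min (e.1 - e.2) (e.2 - e.1)) (Set.toFinite _) ⟨(u, w), huw⟩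
  refine ⟨_, two_le_min_sub huw.ne hH, min_sub_le, ?_, fun u w huw => hmax (u, w) huw⟩
  rcases min_choice (u - w) (w - u) with hmin | hmin
  · exact ⟨w, by simpa [hmin] using huw.symm⟩
  · exact ⟨u, by simpa [hmin] using huw⟩

lemma comap_add_cycleGraph {n : ℕ} (r : Fin (n + 2)) :
    (cycleGraph (n + 2)).comap (· + r) = cycleGraph (n + 2) := by
  ext u w
  simp [cycleGraph_adj]

lemma HamiltonianPair.comap_addRight (hE : HamiltonianPair T E) (r : Fin 19) :
    HamiltonianPair (T.comap (· + r)) (E.comap (· + r)) := by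
  let e := Iso.comap (Equiv.addRight r) T
  refine ⟨isRPancyclic_of_iso hE.isRPancyclic e.symm, ?_, ?_, ?_⟩
  · rw [← comap_add_cycleGraph r]
    exact fun u w huw => hE.cycleGraph_le huw
  · have map_eq : E.map e.symm.toHom = E.comap (· + r) := map_symm E (Equiv.addRight r)
    exact map_eq ▸ map_mem_cycles e.symm.toHom e.symm.injective hE.mem_cycles
  · intro h
    refine hE.ne (SimpleGraph.ext (funext₂ fun u w => ?_))
    simpa using congrFun₂ (congrArg Adj (h.trans (comap_add_cycleGraph r).symm)) (u - r) (w - r)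

lemma not_cycleGraph_adj_add {a : Fin 19} (ha : 2 ≤ a) (ha' : a ≤ 9) (i : Fin 19) :
    ¬(cycleGraph 19).Adj i (i + a) := by
  rw [cycleGraph_adj]
  decide +revert +kernel

lemma HamiltonianPair.exists_not_adj_add (hE : HamiltonianPair T E) (hcard : T.edgeSet.ncard ≤ 24)
    {a : Fin 19} (ha : 2 ≤ a) (ha' : a ≤ 9) : ∃ i, ¬E.Adj i (i + a) := by
  by_contra! hall
  have add_self_ne_zero : a + a ≠ 0 := by
    clear hall
    decide +revert +kernel
  have := le_ncard_edgeSet_of_forall_adj_add (K := T \ cycleGraph 19) add_self_ne_zero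
    fun i => ⟨hE.mem_cycles.1 (hall i), not_cycleGraph_adj_add ha ha' i⟩
  have := ncard_edgeSet_sdiff_cycleGraph_le hE.cycleGraph_le
  lia

lemma mem_chords {a u w : Fin 19} : (u, w) ∈ chords a ↔
    u < w ∧ 2 ≤ min (u - w) (w - u) ∧ min (u - w) (w - u) ≤ a ∧ (u, w) ≠ (a - 1, 18) := by
  simp [chords, and_assoc]

lemma sdiff_cycleGraph_le_ofEdges_chords {a : Fin 19} (h : ¬E.Adj (a - 1) 18)
    (hmax : ∀ u w, (E \ cycleGraph 19).Adj u w → min (u - w) (w - u) ≤ a) :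
    E \ cycleGraph 19 ≤ ofEdges (chords a) := by
  intro u w huw
  wlog hlt : u < w generalizing u w
  · exact (this huw.symm (huw.ne.lt_or_gt.resolve_left hlt)).symm
  have hmem : (u, w) ∈ chords a := by
    refine mem_chords.2 ⟨hlt, two_le_min_sub huw.ne huw.2, hmax u w huw, ?_⟩
    rintro ⟨rfl, rfl⟩
    exact h huw.1
  exact ofEdges_adj.2 ⟨List.mem_map.2 ⟨(u, w), hmem, rfl⟩, huw.ne⟩

/-- `T` has too few edges for `E` to contain all translates of a longest chord. Hence, going around
the circle, some translate in `E` comes right after one that is not in `E`. -/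
lemma HamiltonianPair.exists_rotation (hE : HamiltonianPair T E) (hcard : T.edgeSet.ncard ≤ 24) :
    ∃ r a : Fin 19, 2 ≤ a ∧ a ≤ 9 ∧ (E.comap (· + r)).Adj 0 a ∧
      E.comap (· + r) \ cycleGraph 19 ≤ ofEdges (chords a) := by
  obtain ⟨a, ha, ha', ⟨i, hi⟩, hmax⟩ := hE.exists_longest_chord
  obtain ⟨j, hj⟩ := hE.exists_not_adj_add hcard ha ha'
  obtain ⟨k, hk, hk'⟩ := exists_not_and_add_one (P := fun i => E.Adj i (i + a)) hj hi
  refine ⟨k + 1, a, ha, ha', ?_, sdiff_cycleGraph_le_ofEdges_chords ?_ fun u w huw => ?_⟩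
  · rwa [comap_adj, zero_add, add_comm a]
  · have eighteen_add : 18 + (k + 1) = k := by
      rw [add_left_comm, show (18 + 1 : Fin 19) = 0 from rfl, add_zero]
    rw [comap_adj, sub_add_add_cancel, eighteen_add, add_comm, adj_comm]
    exact hk
  · rw [← comap_add_cycleGraph (k + 1)] at huw
    simpa only [add_sub_add_right_eq_sub] using hmax _ _ huw

end Rotation

section Roots

variable {T E : SimpleGraph (Fin 19)} {a : Fin 19}

lemma ofEdges_cycleEdges : ofEdges cycleEdges = cycleGraph 19 := by
  ext u w
  rw [ofEdges_adj, cycleGraph_adj]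
  decide +revert +kernel

lemma isSimple_cons_cycleEdges (ha : 2 ≤ a) (ha' : a ≤ 9) : IsSimple ((0, a) :: cycleEdges) := by
  rw [IsSimple]
  decide +revert +kernel

lemma isSimple_chords (a : Fin 19) : IsSimple (chords a) :=
  isSimple_of_forall_lt (((List.nodup_finRange 19).product (List.nodup_finRange 19)).filter _)
    fun _ he => (mem_chords.1 he).1

lemma HamiltonianPair.isListed_of_rootCheck (hE : HamiltonianPair T E)
    (hcard : T.edgeSet.ncard ≤ 24) (ha : 2 ≤ a) (ha' : a ≤ 9) (h0a : E.Adj 0 a)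
    (hchords : E \ cycleGraph 19 ≤ ofEdges (chords a)) (hroot : rootCheck a) : IsListed T := by
  have hl : IsSimple ((0, a) :: cycleEdges) := isSimple_cons_cycleEdges ha ha'
  have hadj : (E \ cycleGraph 19).Adj 0 a :=
    ⟨h0a, by simpa using not_cycleGraph_adj_add ha ha' 0⟩
  have hTrails : Trails T E 3 0 (matrix 152 ((0, a) :: cycleEdges))
      (cycleDigits 152 16 ((0, a) :: cycleEdges)) (edge 0 a) ⊥ := by
    refine ⟨(edge_le_iff _).2 (Or.inr hadj), bot_le, mask_bot, ?_, ?_⟩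
    · rw [← ofEdges_cycleEdges]
      exact hl.codes
    · have := ncard_edgeSet_sdiff_cycleGraph_le hE.cycleGraph_le
      have := ncard_edgeSet_sdiff_sup_edge
        (⟨hE.mem_cycles.1 h0a, hadj.2⟩ : (T \ cycleGraph 19).Adj 0 a)
      lia
  have hdeg : deg (edge 0 a) = deg ⊥ + Pi.single 0 1 + Pi.single a 1 := by
    rw [deg_bot, zero_add, deg_edge hadj.ne]
  rw [rootCheck] at hroot
  simp only [force_eq] at hroot
  exact hTrails.isListed_of_trail hE ((isSimple_chords a).encodes_matrix (by norm_num)) hchords hdeg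
    hroot

end Roots

lemma ncard_cycles_of_card_eq {V : Type*} [Fintype V] {G : SimpleGraph V} {r n : ℕ}
    (hV : Fintype.card V = n + 2) (hG : IsRPancyclic G r) : (cycles G (n + 2)).ncard = r := by
  rw [← cycleCount_eq_ncard_cycles]
  exact hG.2 _ (hV ▸ hG.1) hV.ge

lemma exists_hamiltonianPair {W : Type*} [Fintype W] {G : SimpleGraph W}
    (hW : Fintype.card W = 19) (hG : IsRPancyclic G 2) :
    ∃ T E, Nonempty (G ≃g T) ∧ HamiltonianPair T E := by
  obtain ⟨C, hC⟩ := Set.nonempty_of_ncard_ne_zero (ncard_cycles_of_card_eq hW hG ▸ two_ne_zero)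
  obtain ⟨hCG, p, rfl⟩ := hC
  have p_bijective : Function.Bijective p :=
    (Fintype.bijective_iff_injective_and_card p).2 ⟨p.injective, by rw [hW, Fintype.card_fin]⟩
  let e : G.comap p ≃g G := Iso.comap (Equiv.ofBijective p p_bijective) G
  have hT : IsRPancyclic (G.comap p) 2 := isRPancyclic_of_iso hG e.symm
  obtain ⟨E, hE, hne⟩ := Set.exists_ne_of_one_lt_ncard
    (one_lt_two.trans_eq (ncard_cycles_of_card_eq (Fintype.card_fin 19) hT).symm) (cycleGraph 19)
  exact ⟨_, E, ⟨e.symm⟩, hT, (map_le_iff_le_comap p _ G).1 hCG, hE, hne⟩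

lemma rootCheck_two : rootCheck 2 := by decide +kernel

lemma rootCheck_three : rootCheck 3 := by decide +kernel

lemma rootCheck_four : rootCheck 4 := by decide +kernel

lemma rootCheck_five : rootCheck 5 := by decide +kernel

lemma rootCheck_six : rootCheck 6 := by decide +kernel

lemma rootCheck_seven : rootCheck 7 := by decide +kernel

lemma rootCheck_eight : rootCheck 8 := by decide +kernel

lemma rootCheck_nine : rootCheck 9 := by decide +kernel

lemma rootCheck_of_two_le {a : Fin 19} (ha : 2 ≤ a) (ha' : a ≤ 9) : rootCheck a := by
  have : a = 2 ∨ a = 3 ∨ a = 4 ∨ a = 5 ∨ a = 6 ∨ a = 7 ∨ a = 8 ∨ a = 9 := by decide +revert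
  rcases this with rfl | rfl | rfl | rfl | rfl | rfl | rfl | rfl
  exacts [rootCheck_two, rootCheck_three, rootCheck_four, rootCheck_five, rootCheck_six,
    rootCheck_seven, rootCheck_eight, rootCheck_nine]

lemma exists_iso_solution {W : Type*} [Fintype W] {G : SimpleGraph W} (hW : Fintype.card W = 19)
    (hcard : G.edgeSet.ncard ≤ 24) (hG : IsRPancyclic G 2) :
    ∃ i, Nonempty (G ≃g ofEdges (solution i)) := by
  obtain ⟨T, E, ⟨e⟩, hE⟩ := exists_hamiltonianPair hW hG
  have ncard_edgeSet_le {T' : SimpleGraph (Fin 19)} (e : G ≃g T') : T'.edgeSet.ncard ≤ 24 :=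
    (Set.ncard_congr' e.mapEdgeSet).symm.trans_le hcard
  obtain ⟨r, a, ha, ha', h0a, hchords⟩ := hE.exists_rotation (ncard_edgeSet_le e)
  let e' : G ≃g T.comap (· + r) := e.trans (Iso.comap (Equiv.addRight r) T).symm
  obtain ⟨A, hA, hlisted⟩ := (hE.comap_addRight r).isListed_of_rootCheck (ncard_edgeSet_le e')
    ha ha' h0a hchords (rootCheck_of_two_le ha ha')
  obtain ⟨i, ⟨f⟩⟩ := exists_iso_solution_of_listed hA hlisted
  exact ⟨i, ⟨e'.trans f⟩⟩

end TwoPancyclic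


theorem two_pancyclic_count_order_19 : ExactlyNUpToIso 2 3 19 24 :=
  open TwoPancyclic in
  ⟨fun i => ofEdges (solution i), fun _ _ hij => isEmpty_iso_solution hij,
    fun i => ⟨isRPancyclic_solution i, (ncard_edgeSet_ofEdges_le _).trans (by decide +revert)⟩,
    fun _ _ _ hW hcard hG => exists_iso_solution hW hcard hG⟩
end
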